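/- arXiv:2108.00931 — 6 statements merged into one kernel-verified Lean document; each statement's English description precedes it below -/
import Mathlib

section
/- Let φ₀, φ₁ ∈ ℂ^(2^n) be nonzero vectors and let G be the subgroup of invertible 2^n × 2^n complex matrices generated by Stab(φ₀) ∪ Stab(φ₁). If R is an n-qubit Pauli string and ν, ν′ ∈ ℂ∖{0} satisfy νR ∈ G and ν′R ∈ G, then ν = ν′ or ν = −ν′. -/
open Matrix

noncomputable section

/-- The single-qubit Pauli matrices. -/
def pauliI : Matrix (Fin 2) (Fin 2) ℂ := 1
def pauliX : Matrix (Fin 2) (Fin 2) ℂ := !![0, 1; 1, 0]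
def pauliY : Matrix (Fin 2) (Fin 2) ℂ := !![0, -Complex.I; Complex.I, 0]
def pauliZ : Matrix (Fin 2) (Fin 2) ℂ := !![1, 0; 0, -1]

/-- Kronecker product of a `2 × 2` matrix (most significant qubit) with a
`2^m × 2^m` matrix, indexed by `Fin (2^(m+1))`. -/
def kron {m : ℕ} (A : Matrix (Fin 2) (Fin 2) ℂ) (B : Matrix (Fin (2 ^ m)) (Fin (2 ^ m)) ℂ) :
    Matrix (Fin (2 ^ (m + 1))) (Fin (2 ^ (m + 1))) ℂ := fun i j =>
  A (if (i : ℕ) < 2 ^ m then 0 else 1) (if (j : ℕ) < 2 ^ m then 0 else 1) *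
    B ⟨(i : ℕ) % 2 ^ m, Nat.mod_lt _ (pow_pos (by norm_num) m)⟩
      ⟨(j : ℕ) % 2 ^ m, Nat.mod_lt _ (pow_pos (by norm_num) m)⟩

/-- `IsPauliString n M` holds iff `M` is a Kronecker product of `n` single-qubit
Pauli matrices. -/
def IsPauliString : (n : ℕ) → Matrix (Fin (2 ^ n)) (Fin (2 ^ n)) ℂ → Prop
  | 0, M => M = 1
  | n + 1, M => ∃ Q ∈ ({pauliI, pauliX, pauliY, pauliZ} : Set (Matrix (Fin 2) (Fin 2) ℂ)),
      ∃ B, IsPauliString n B ∧ M = kron Q B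

/-- An `n`-qubit Pauli LIM: a nonzero scalar multiple of an `n`-qubit Pauli string. -/
def IsPauliLIM (n : ℕ) (A : Matrix (Fin (2 ^ n)) (Fin (2 ^ n)) ℂ) : Prop :=
  ∃ (c : ℂ) (P : Matrix (Fin (2 ^ n)) (Fin (2 ^ n)) ℂ),
    c ≠ 0 ∧ IsPauliString n P ∧ A = c • P

/-- The stabilizer set of a vector: all `n`-qubit Pauli LIMs fixing `φ`. -/
def PauliStab {n : ℕ} (φ : Fin (2 ^ n) → ℂ) : Set (Matrix (Fin (2 ^ n)) (Fin (2 ^ n)) ℂ) :=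
  {A | IsPauliLIM n A ∧ A.mulVec φ = φ}

/-- Two vectors are Pauli-isomorphic if some Pauli LIM maps one to the other. -/
def PauliIso {n : ℕ} (φ ψ : Fin (2 ^ n) → ℂ) : Prop :=
  ∃ A, IsPauliLIM n A ∧ A.mulVec φ = ψ

/-- Membership in the `n`-qubit Pauli group: `i^k · P` with `P` a Pauli string. -/
def InPauliGroup (n : ℕ) (A : Matrix (Fin (2 ^ n)) (Fin (2 ^ n)) ℂ) : Prop :=
  ∃ (k : Fin 4) (P : Matrix (Fin (2 ^ n)) (Fin (2 ^ n)) ℂ),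
    IsPauliString n P ∧ A = (Complex.I ^ (k : ℕ)) • P

/-- The vector `|0⟩⊗φ₀ + |1⟩⊗φ₁`: first `2^m` coordinates are `φ₀`, last are `φ₁`. -/
def dirac {m : ℕ} (φ₀ φ₁ : Fin (2 ^ m) → ℂ) : Fin (2 ^ (m + 1)) → ℂ := fun i =>
  if h : (i : ℕ) < 2 ^ m then φ₀ ⟨i, h⟩
  else φ₁ ⟨(i : ℕ) - 2 ^ m, by
    have h1 := i.isLt
    have h2 : (2 : ℕ) ^ (m + 1) = 2 ^ m + 2 ^ m := by rw [pow_succ]; omega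
    omega⟩

/-- An `n`-qubit stabilizer state: a unit vector stabilized by exactly `2^n`
elements of the Pauli group. -/
def IsStabilizerState (n : ℕ) (φ : Fin (2 ^ n) → ℂ) : Prop :=
  (∑ i, Complex.normSq (φ i)) = 1 ∧
    Set.ncard {A : Matrix (Fin (2 ^ n)) (Fin (2 ^ n)) ℂ |
      InPauliGroup n A ∧ A.mulVec φ = φ} = 2 ^ n

/-- The standard Hermitian inner product on `ℂ^N`. -/
def hinner {N : ℕ} (φ ψ : Fin N → ℂ) : ℂ :=
  ∑ i, (starRingEnd ℂ) (φ i) * ψ i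



/-- `Z^{a_m} ⊗ ⋯ ⊗ Z^{a_1}` (the `j`-th tensor factor is `Z` iff `a j = true`). -/
def zString : (m : ℕ) → (Fin m → Bool) → Matrix (Fin (2 ^ m)) (Fin (2 ^ m)) ℂ
  | 0, _ => 1
  | m + 1, a => kron (if a (Fin.last m) then pauliZ else 1) (zString m (fun j => a j.castSucc))

open Classical in
/-- Number of edges of `G` with both endpoints in the set of vertices
`j` with `x.testBit j = true`. -/
def edgeCount {n : ℕ} (G : SimpleGraph (Fin n)) (x : ℕ) : ℕ :=
  (Finset.univ.filter (fun p : Fin n × Fin n =>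
    p.1 < p.2 ∧ G.Adj p.1 p.2 ∧ x.testBit p.1.val = true ∧ x.testBit p.2.val = true)).card

/-- The graph state of a simple graph on vertices `{0, …, n-1}`; vertex `j`
corresponds to the `j`-th bit of the basis-state index. -/
def graphState {n : ℕ} (G : SimpleGraph (Fin n)) : Fin (2 ^ n) → ℂ :=
  fun x => (-1 : ℂ) ^ edgeCount G (x : ℕ) / Real.sqrt (2 ^ n)

/-- The subfunction of `f` of order `ℓ` obtained by fixing the first `ℓ`
arguments to `a`. -/
def subfun {N : ℕ} (f : (Fin N → Bool) → ℂ) (ℓ : ℕ) (a : Fin ℓ → Bool) :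
    (Fin (N - ℓ) → Bool) → ℂ := fun x =>
  f (fun i => if h : (i : ℕ) < ℓ then a ⟨i, h⟩
      else x ⟨(i : ℕ) - ℓ, by have := i.isLt; omega⟩)

/-- A strong matching: a set of pairwise vertex-disjoint edges of `G` such that
every edge of `G` with both endpoints among the matched vertices is in `M`. -/
def IsStrongMatching {V : Type*} (G : SimpleGraph V) (M : Set (Sym2 V)) : Prop :=
  M ⊆ G.edgeSet ∧
  (∀ e₁ ∈ M, ∀ e₂ ∈ M, e₁ ≠ e₂ → ∀ v, v ∈ e₁ → v ∉ e₂) ∧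
  (∀ e ∈ G.edgeSet, (∀ v ∈ e, ∃ e' ∈ M, v ∈ e') → e ∈ M)

/-- An `(S,T)`-strong matching: a strong matching each of whose edges has one
endpoint in `S` and the other in `T`. -/
def IsSTStrongMatching {V : Type*} (G : SimpleGraph V) (S T : Set V) (M : Set (Sym2 V)) : Prop :=
  IsStrongMatching G M ∧ ∀ e ∈ M, ∃ u ∈ S, ∃ w ∈ T, e = s(u, w)

/-- The `n × n` grid graph. -/
def gridGraph (n : ℕ) : SimpleGraph (Fin n × Fin n) :=
  SimpleGraph.fromRel (fun u v =>
    (u.1 = v.1 ∧ (u.2 : ℕ) + 1 = (v.2 : ℕ)) ∨ (u.2 = v.2 ∧ (u.1 : ℕ) + 1 = (v.1 : ℕ)))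

/-- The amplitude function of the graph state of `G`, on assignments `V → Bool`. -/
def ampGraphState {V : Type*} [Fintype V] (G : SimpleGraph V) (x : V → Bool) : ℂ :=
  (-1 : ℂ) ^ Set.ncard {e ∈ G.edgeSet | ∀ v ∈ e, x v = true} / Real.sqrt (2 ^ Fintype.card V)

open Classical in
/-- The coset state of `C ⊆ {0,…,2^n − 1}`: the uniform superposition over `C`. -/
def cosetState (n : ℕ) (C : Set ℕ) : Fin (2 ^ n) → ℂ :=
  fun x => if (x : ℕ) ∈ C then 1 / Real.sqrt (C.ncard) else 0


/-- `X^{a_m} ⊗ ⋯ ⊗ X^{a_1}` (the `j`-th tensor factor is `X` iff `a j = true`). -/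
def xString : (m : ℕ) → (Fin m → Bool) → Matrix (Fin (2 ^ m)) (Fin (2 ^ m)) ℂ
  | 0, _ => 1
  | m + 1, a => kron (if a (Fin.last m) then pauliX else 1) (xString m (fun j => a j.castSucc))

def kronEquiv (m : ℕ) : Fin (2 ^ (m + 1)) ≃ Fin 2 × Fin (2 ^ m) :=
  (finCongr (pow_succ' 2 m)).trans finProdFinEquiv.symm

lemma kron_eq {m : ℕ} (A : Matrix (Fin 2) (Fin 2) ℂ) (B : Matrix (Fin (2 ^ m)) (Fin (2 ^ m)) ℂ) :
    kron A B = (Matrix.kroneckerMap (· * ·) A B).submatrix (kronEquiv m) (kronEquiv m) := by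
  have key : ∀ i : Fin (2 ^ (m + 1)), kronEquiv m i =
      ((if (i : ℕ) < 2 ^ m then 0 else 1),
        ⟨(i : ℕ) % 2 ^ m, Nat.mod_lt _ (pow_pos (by norm_num) m)⟩) := by
    intro i
    have hpos : 0 < 2 ^ m := pow_pos (by norm_num) m
    have hi : (i : ℕ) < 2 ^ m + 2 ^ m := by
      have := i.isLt
      have h2 : (2 : ℕ) ^ (m + 1) = 2 ^ m + 2 ^ m := by rw [pow_succ]; omega
      omega
    apply Prod.ext
    · apply Fin.ext
      change (i : ℕ) / 2 ^ m = _
      split_ifs with h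
      · exact Nat.div_eq_of_lt h
      · change (i : ℕ) / 2 ^ m = 1
        exact Nat.div_eq_of_lt_le (by omega) (by omega)
    · apply Fin.ext
      rfl
  ext i j
  simp only [Matrix.submatrix_apply, key, Matrix.kroneckerMap_apply]
  rfl

lemma kron_mul {m : ℕ} (A C : Matrix (Fin 2) (Fin 2) ℂ)
    (B D : Matrix (Fin (2 ^ m)) (Fin (2 ^ m)) ℂ) :
    kron A B * kron C D = kron (A * C) (B * D) := by
  rw [kron_eq, kron_eq, kron_eq, Matrix.submatrix_mul_equiv, ← Matrix.mul_kronecker_mul]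

lemma kron_one {m : ℕ} : kron 1 (1 : Matrix (Fin (2 ^ m)) (Fin (2 ^ m)) ℂ) = 1 := by
  rw [kron_eq, Matrix.one_kronecker_one, Matrix.submatrix_one_equiv]

lemma kron_neg_left {m : ℕ} (A : Matrix (Fin 2) (Fin 2) ℂ)
    (B : Matrix (Fin (2 ^ m)) (Fin (2 ^ m)) ℂ) : kron (-A) B = -kron A B := by
  ext i j; simp [kron]

lemma kron_neg_right {m : ℕ} (A : Matrix (Fin 2) (Fin 2) ℂ)
    (B : Matrix (Fin (2 ^ m)) (Fin (2 ^ m)) ℂ) : kron A (-B) = -kron A B := by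
  ext i j; simp [kron]

lemma pauli_sq {Q : Matrix (Fin 2) (Fin 2) ℂ}
    (h : Q ∈ ({pauliI, pauliX, pauliY, pauliZ} : Set (Matrix (Fin 2) (Fin 2) ℂ))) :
    Q * Q = 1 := by
  rcases h with rfl | rfl | rfl | rfl <;> ext i j <;> fin_cases i <;> fin_cases j <;>
    simp [pauliI, pauliX, pauliY, pauliZ]

lemma pauli_comm {Q Q' : Matrix (Fin 2) (Fin 2) ℂ}
    (h : Q ∈ ({pauliI, pauliX, pauliY, pauliZ} : Set (Matrix (Fin 2) (Fin 2) ℂ)))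
    (h' : Q' ∈ ({pauliI, pauliX, pauliY, pauliZ} : Set (Matrix (Fin 2) (Fin 2) ℂ))) :
    Q * Q' = Q' * Q ∨ Q * Q' = -(Q' * Q) := by
  rcases h with rfl | rfl | rfl | rfl <;> rcases h' with rfl | rfl | rfl | rfl <;>
    first
    | (left; rfl)
    | (left; simp [pauliI]; done)
    | (right; ext i j; fin_cases i <;> fin_cases j <;> simp [pauliX, pauliY, pauliZ]; done)

lemma string_sq : ∀ (n : ℕ) (P : Matrix (Fin (2 ^ n)) (Fin (2 ^ n)) ℂ), IsPauliString n P →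
    P * P = 1
  | 0, P, h => by
    have h : P = 1 := h
    simp [h]
  | n + 1, P, h => by
    obtain ⟨Q, hQ, B, hB, rfl⟩ := h
    rw [kron_mul, pauli_sq hQ, string_sq n B hB, kron_one]

lemma string_comm : ∀ (n : ℕ) (P P' : Matrix (Fin (2 ^ n)) (Fin (2 ^ n)) ℂ), IsPauliString n P →
    IsPauliString n P' → P * P' = P' * P ∨ P * P' = -(P' * P)
  | 0, P, P', h, h' => by
    have h : P = 1 := h
    simp [h]
  | n + 1, P, P', h, h' => by
    obtain ⟨Q, hQ, B, hB, rfl⟩ := h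
    obtain ⟨Q', hQ', B', hB', rfl⟩ := h'
    rw [kron_mul, kron_mul]
    rcases pauli_comm hQ hQ' with h1 | h1 <;> rcases string_comm n B B' hB hB' with h2 | h2 <;>
      rw [h1, h2] <;> simp [kron_neg_left, kron_neg_right]

/-- Commuting up to sign. -/
def SComm {M : Type*} [Monoid M] [HasDistribNeg M] (a b : M) : Prop :=
  a * b = b * a ∨ a * b = -(b * a)

section grp
variable {U : Type*} [Group U] [HasDistribNeg U]

lemma SComm.symm {a b : U} (h : SComm a b) : SComm b a := by
  rcases h with h | h
  · exact Or.inl h.symm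
  · right; rw [h, neg_neg]

lemma SComm.mul_left {a b c : U} (h : SComm a c) (h' : SComm b c) : SComm (a * b) c := by
  unfold SComm
  rcases h with h | h <;> rcases h' with h' | h' <;>
    simp [mul_assoc, h', ← mul_assoc a c b, h]

lemma SComm.inv_left {a c : U} (h : SComm a c) : SComm a⁻¹ c := by
  unfold SComm
  rcases h with h | h
  · left
    rw [inv_mul_eq_iff_eq_mul, ← mul_assoc, h, mul_assoc, mul_inv_cancel, mul_one]
  · right
    rw [inv_mul_eq_iff_eq_mul, mul_neg, ← mul_assoc, h, neg_mul, neg_neg, mul_assoc,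
      mul_inv_cancel, mul_one]

lemma SComm.closure_left {S : Set U} {c : U} (hS : ∀ a ∈ S, SComm a c) {a : U}
    (ha : a ∈ Subgroup.closure S) : SComm a c := by
  induction ha using Subgroup.closure_induction with
  | mem x hx => exact hS x hx
  | one => left; simp
  | mul x y _ _ hx hy => exact hx.mul_left hy
  | inv x _ hx => exact hx.inv_left

lemma SComm.closure {S T : Set U} (hS : ∀ a ∈ S, ∀ b ∈ T, SComm a b) {a b : U}
    (ha : a ∈ Subgroup.closure S) (hb : b ∈ Subgroup.closure T) : SComm a b := by
  refine SComm.closure_left (fun x hx => ?_) ha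
  exact (SComm.closure_left (fun y hy => (hS x hx y hy).symm) hb).symm

lemma sq_closure {S : Set U} (hc : ∀ a ∈ S, ∀ b ∈ S, SComm a b) (hs : ∀ a ∈ S, a * a = 1) {a : U}
    (ha : a ∈ Subgroup.closure S) : a * a = 1 ∨ a * a = -1 := by
  induction ha using Subgroup.closure_induction with
  | mem x hx => exact Or.inl (hs x hx)
  | one => left; simp
  | mul x y hx' hy' hx hy =>
    have e : x * y * (x * y) = x * (y * x) * y := by group
    rw [e]
    rcases SComm.closure hc hy' hx' with h | h <;> rw [h] <;>
      rcases hx with hx | hx <;> rcases hy with hy | hy <;>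
      simp [← mul_assoc, hx] <;> simp [hy]
  | inv x _ hx =>
    rw [← _root_.mul_inv_rev]
    rcases hx with hx | hx <;> rw [hx]
    · simp
    · right; rw [inv_eq_iff_mul_eq_one]; simp

lemma pm_closure_union {S T : Set U} (hc : ∀ a ∈ T, ∀ b ∈ S, SComm a b) {u : U}
    (hu : u ∈ Subgroup.closure (S ∪ T)) :
    ∃ a ∈ Subgroup.closure S, ∃ b ∈ Subgroup.closure T, u = a * b ∨ u = -(a * b) := by
  induction hu using Subgroup.closure_induction with
  | mem x hx =>
    rcases hx with hx | hx
    · exact ⟨x, Subgroup.subset_closure hx, 1, one_mem _, by simp⟩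
    · exact ⟨1, one_mem _, x, Subgroup.subset_closure hx, by simp⟩
  | one => exact ⟨1, one_mem _, 1, one_mem _, by simp⟩
  | mul x y _ _ hx hy =>
    obtain ⟨a, ha, b, hb, hx⟩ := hx
    obtain ⟨a', ha', b', hb', hy⟩ := hy
    refine ⟨a * a', mul_mem ha ha', b * b', mul_mem hb hb', ?_⟩
    have e : a * b * (a' * b') = a * (b * a') * b' := by group
    have e' : a * a' * (b * b') = a * (a' * b) * b' := by group
    rcases SComm.closure hc hb ha' with h | h <;> rcases hx with rfl | rfl <;>
      rcases hy with rfl | rfl <;> simp [e, e', h]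
  | inv x _ hx =>
    obtain ⟨a, ha, b, hb, hx⟩ := hx
    refine ⟨a⁻¹, inv_mem ha, b⁻¹, inv_mem hb, ?_⟩
    have h1 : SComm b⁻¹ a⁻¹ := SComm.closure hc (inv_mem hb) (inv_mem ha)
    have hn : ∀ z : U, (-z)⁻¹ = -z⁻¹ := fun z => by
      rw [inv_eq_iff_mul_eq_one]; simp
    rcases h1 with h | h <;> rcases hx with rfl | rfl <;> simp [hn, h]

end grp

lemma lim_scomm {n : ℕ} {u v : (Matrix (Fin (2 ^ n)) (Fin (2 ^ n)) ℂ)ˣ}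
    (hu : IsPauliLIM n u) (hv : IsPauliLIM n v) : SComm u v := by
  obtain ⟨c, P, _, hP, hu⟩ := hu
  obtain ⟨d, Q, _, hQ, hv⟩ := hv
  rcases string_comm n P Q hP hQ with h | h
  · left; apply Units.ext
    simp [hu, hv, h, smul_smul, mul_comm]
  · right; apply Units.ext
    simp [hu, hv, h, smul_smul, mul_comm]

lemma stab_sq {n : ℕ} {φ : Fin (2 ^ n) → ℂ} (h0 : φ ≠ 0)
    {u : (Matrix (Fin (2 ^ n)) (Fin (2 ^ n)) ℂ)ˣ}
    (hu : u ∈ Subgroup.closure {u : (Matrix (Fin (2 ^ n)) (Fin (2 ^ n)) ℂ)ˣ |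
      (u : Matrix (Fin (2 ^ n)) (Fin (2 ^ n)) ℂ) ∈ PauliStab φ}) : u * u = 1 := by
  have hfix : (u : Matrix (Fin (2 ^ n)) (Fin (2 ^ n)) ℂ).mulVec φ = φ := by
    induction hu using Subgroup.closure_induction with
    | mem x hx => exact hx.2
    | one => simp
    | mul x y _ _ hx hy => rw [Units.val_mul, ← Matrix.mulVec_mulVec, hy, hx]
    | inv x _ hx =>
      nth_rewrite 1 [← hx]
      rw [Matrix.mulVec_mulVec, ← Units.val_mul]; simp
  have hs : ∀ a ∈ {u : (Matrix (Fin (2 ^ n)) (Fin (2 ^ n)) ℂ)ˣ |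
      (u : Matrix (Fin (2 ^ n)) (Fin (2 ^ n)) ℂ) ∈ PauliStab φ}, a * a = 1 := by
    rintro a ⟨⟨c, P, _, hP, ha⟩, hφ⟩
    have h1 : (a : Matrix (Fin (2 ^ n)) (Fin (2 ^ n)) ℂ) * a = (c * c) • 1 := by
      rw [ha, smul_mul_smul_comm, string_sq n P hP]
    have h2 : ((a : Matrix (Fin (2 ^ n)) (Fin (2 ^ n)) ℂ) * a).mulVec φ = φ := by
      rw [← Matrix.mulVec_mulVec, hφ, hφ]
    rw [h1, Matrix.smul_mulVec, Matrix.one_mulVec] at h2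
    have h3 : c * c = 1 := by
      have : (c * c - 1) • φ = 0 := by rw [sub_smul, h2, one_smul, sub_self]
      rcases smul_eq_zero.mp this with h | h
      · exact sub_eq_zero.mp h
      · exact absurd h h0
    apply Units.ext
    rw [Units.val_mul, h1, h3, one_smul, Units.val_one]
  rcases sq_closure (fun a ha b hb => lim_scomm ha.1 hb.1) hs hu with h | h
  · exact h
  · exfalso
    have h2 : ((u * u : (Matrix (Fin (2 ^ n)) (Fin (2 ^ n)) ℂ)ˣ) :
        Matrix (Fin (2 ^ n)) (Fin (2 ^ n)) ℂ).mulVec φ = φ := by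
      rw [Units.val_mul, ← Matrix.mulVec_mulVec, hfix, hfix]
    rw [h] at h2
    simp only [Units.val_neg, Units.val_one, Matrix.neg_mulVec, Matrix.one_mulVec] at h2
    exact h0 (self_eq_neg.mp h2.symm)

/-- If `νR` and `ν′R` both lie in the group generated by `Stab(φ₀) ∪ Stab(φ₁)`,
then `ν = ±ν′`. -/
theorem scalar_pm_one_in_generated_group (n : ℕ) (φ₀ φ₁ : Fin (2 ^ n) → ℂ)
    (h₀ : φ₀ ≠ 0) (h₁ : φ₁ ≠ 0)
    (R : Matrix (Fin (2 ^ n)) (Fin (2 ^ n)) ℂ) (hR : IsPauliString n R)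
    (ν ν' : ℂ) (hν : ν ≠ 0) (hν' : ν' ≠ 0)
    (h : ∃ u ∈ Subgroup.closure {u : (Matrix (Fin (2 ^ n)) (Fin (2 ^ n)) ℂ)ˣ |
        (u : Matrix (Fin (2 ^ n)) (Fin (2 ^ n)) ℂ) ∈ PauliStab φ₀ ∪ PauliStab φ₁},
        (u : Matrix (Fin (2 ^ n)) (Fin (2 ^ n)) ℂ) = ν • R)
    (h' : ∃ u ∈ Subgroup.closure {u : (Matrix (Fin (2 ^ n)) (Fin (2 ^ n)) ℂ)ˣ |
        (u : Matrix (Fin (2 ^ n)) (Fin (2 ^ n)) ℂ) ∈ PauliStab φ₀ ∪ PauliStab φ₁},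
        (u : Matrix (Fin (2 ^ n)) (Fin (2 ^ n)) ℂ) = ν' • R) :
    ν = ν' ∨ ν = -ν' := by
  obtain ⟨u, hu, hu'⟩ := h
  obtain ⟨v, hv, hv'⟩ := h'
  have hw := mul_mem hu (inv_mem hv)
  obtain ⟨a, ha, b, hb, hab⟩ := pm_closure_union
    (S := {u : (Matrix (Fin (2 ^ n)) (Fin (2 ^ n)) ℂ)ˣ |
      (u : Matrix (Fin (2 ^ n)) (Fin (2 ^ n)) ℂ) ∈ PauliStab φ₀})
    (T := {u : (Matrix (Fin (2 ^ n)) (Fin (2 ^ n)) ℂ)ˣ |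
      (u : Matrix (Fin (2 ^ n)) (Fin (2 ^ n)) ℂ) ∈ PauliStab φ₁})
    (fun a ha b hb => lim_scomm ha.1 hb.1) hw
  have ha2 := stab_sq h₀ ha
  have hb2 := stab_sq h₁ hb
  have huv : (u : Matrix (Fin (2 ^ n)) (Fin (2 ^ n)) ℂ) = (ν / ν') • (v : Matrix _ _ ℂ) := by
    rw [hu', hv', smul_smul, div_mul_cancel₀ _ hν']
  have hw1 : ((u * v⁻¹ : (Matrix (Fin (2 ^ n)) (Fin (2 ^ n)) ℂ)ˣ) :
      Matrix (Fin (2 ^ n)) (Fin (2 ^ n)) ℂ) = (ν / ν') • 1 := by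
    rw [Units.val_mul, huv, smul_mul_assoc, Units.mul_inv]
  have hwb : u * v⁻¹ * b = a ∨ u * v⁻¹ * b = -a := by
    rcases hab with h | h <;> rw [h] <;> simp [mul_assoc, hb2]
  have hw2 : (u * v⁻¹ * b) * (u * v⁻¹ * b) = 1 := by
    rcases hwb with h | h <;> rw [h] <;> simp [ha2]
  have hw3 := congrArg (Units.val) hw2
  have hb3 := congrArg (Units.val) hb2
  rw [Units.val_mul, Units.val_mul (u * v⁻¹), hw1, smul_mul_assoc, one_mul,
    smul_mul_smul_comm, ← Units.val_mul, hb3, Units.val_one] at hw3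
  have h4 := congrFun (congrFun hw3 0) 0
  simp only [Matrix.smul_apply, Matrix.one_apply_eq, smul_eq_mul, mul_one] at h4
  rcases mul_self_eq_one_iff.mp h4 with h | h
  · left; rwa [div_eq_one_iff_eq hν'] at h
  · right; rw [div_eq_iff hν'] at h; simpa using h
end
end

section
/- Let n ≥ 2, let ψ₀ be an (n−1)-qubit stabilizer state, let P be an (n−1)-qubit Pauli string, and let λ ∈ {1, −1, i, −i}. Then the unit vector (1/√2)·(|0⟩⊗ψ₀ + λ·|1⟩⊗Pψ₀) is an n-qubit stabilizer state. -/
open Matrix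

noncomputable section

/-! Proof. -/

set_option linter.unusedSimpArgs false

lemma smv {n : ℕ} (c : ℂ) (M : Matrix (Fin n) (Fin n) ℂ) (v : Fin n → ℂ) :
    (c • M).mulVec v = c • M.mulVec v := Matrix.smul_mulVec c M v


def eSum (m : ℕ) : Fin (2 ^ m) ⊕ Fin (2 ^ m) ≃ Fin (2 ^ (m + 1)) :=
  finSumFinEquiv.trans (finCongr (by rw [pow_succ]; omega))

lemma eSum_inl (m : ℕ) (i : Fin (2 ^ m)) : ((eSum m (Sum.inl i) : Fin _) : ℕ) = i := by
  simp [eSum]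

lemma eSum_inr (m : ℕ) (i : Fin (2 ^ m)) :
    ((eSum m (Sum.inr i) : Fin _) : ℕ) = 2 ^ m + i := by
  simp [eSum, add_comm]

abbrev Mt (m : ℕ) := Matrix (Fin (2 ^ m)) (Fin (2 ^ m)) ℂ

def blk {m : ℕ} (A B C D : Mt m) : Mt (m + 1) :=
  Matrix.reindex (eSum m) (eSum m) (Matrix.fromBlocks A B C D)

lemma blk_mul {m : ℕ} (A B C D A' B' C' D' : Mt m) :
    blk A B C D * blk A' B' C' D' =
      blk (A * A' + B * C') (A * B' + B * D') (C * A' + D * C') (C * B' + D * D') := by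
  simp [blk, Matrix.submatrix_mul_equiv, Matrix.fromBlocks_multiply]

lemma blk_inj {m : ℕ} {A B C D A' B' C' D' : Mt m} :
    blk A B C D = blk A' B' C' D' ↔ A = A' ∧ B = B' ∧ C = C' ∧ D = D' := by
  unfold blk
  rw [(Matrix.reindex (eSum m) (eSum m)).injective.eq_iff, Matrix.fromBlocks_inj]

lemma blk_smul {m : ℕ} (c : ℂ) (A B C D : Mt m) :
    c • blk A B C D = blk (c • A) (c • B) (c • C) (c • D) := by
  unfold blk
  rw [← Matrix.fromBlocks_smul]
  rfl

lemma blk_one {m : ℕ} : blk (1 : Mt m) 0 0 1 = 1 := by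
  simp [blk]

lemma blk_conjTranspose {m : ℕ} (A B C D : Mt m) :
    (blk A B C D)ᴴ = blk Aᴴ Cᴴ Bᴴ Dᴴ := by
  simp [blk, Matrix.fromBlocks_conjTranspose]

lemma kron_blk {m : ℕ} (Q : Matrix (Fin 2) (Fin 2) ℂ) (B : Mt m) :
    kron Q B = blk (Q 0 0 • B) (Q 0 1 • B) (Q 1 0 • B) (Q 1 1 • B) := by
  unfold blk
  rw [← Equiv.symm_apply_eq]
  ext i j
  rcases i with i | i <;> rcases j with j | j <;>
    simp [kron, eSum_inl, eSum_inr, Nat.mod_eq_of_lt]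

lemma dirac_comp {m : ℕ} (a b : Fin (2 ^ m) → ℂ) :
    dirac a b ∘ eSum m = Sum.elim a b := by
  ext i
  rcases i with i | i <;> simp [dirac, eSum_inl, eSum_inr]

lemma dirac_eq {m : ℕ} (a b : Fin (2 ^ m) → ℂ) :
    dirac a b = Sum.elim a b ∘ (eSum m).symm := by
  rw [← dirac_comp]; ext; simp

lemma dirac_inj {m : ℕ} {a b a' b' : Fin (2 ^ m) → ℂ} :
    dirac a b = dirac a' b' ↔ a = a' ∧ b = b' := by
  constructor
  · intro h
    have h2 : Sum.elim a b = Sum.elim a' b' := by rw [← dirac_comp, h, dirac_comp]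
    exact ⟨funext fun i => congrFun h2 (Sum.inl i), funext fun i => congrFun h2 (Sum.inr i)⟩
  · rintro ⟨rfl, rfl⟩; rfl

lemma blk_mulVec {m : ℕ} (A B C D : Mt m) (a b : Fin (2 ^ m) → ℂ) :
    (blk A B C D).mulVec (dirac a b) =
      dirac (A.mulVec a + B.mulVec b) (C.mulVec a + D.mulVec b) := by
  rw [dirac_eq, dirac_eq, blk, Matrix.reindex_apply, Matrix.submatrix_mulVec_equiv]
  have : (Sum.elim a b ∘ (eSum m).symm) ∘ (eSum m).symm.symm = Sum.elim a b := by
    ext; simp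
  rw [this, Matrix.fromBlocks_mulVec]
  simp

lemma neg_IG {m : ℕ} {c : ℂ} (hc : c ∈ ({1, -1, Complex.I, -Complex.I} : Set ℂ)) {A : Mt m}
    (hA : IsPauliString m A) : InPauliGroup m (c • A) := by
  rcases hc with rfl | rfl | rfl | rfl
  · exact ⟨0, A, hA, by simp⟩
  · exact ⟨2, A, hA, by simp⟩
  · exact ⟨1, A, hA, by simp⟩
  · exact ⟨3, A, hA, by simp [Complex.I_pow_three]⟩

lemma PG_iff {m : ℕ} {A : Mt m} : InPauliGroup m A ↔
    ∃ c ∈ ({1, -1, Complex.I, -Complex.I} : Set ℂ), ∃ P, IsPauliString m P ∧ A = c • P := by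
  constructor
  · rintro ⟨k, P, hP, rfl⟩
    refine ⟨_, ?_, P, hP, rfl⟩
    fin_cases k <;> simp [Complex.I_pow_three]
  · rintro ⟨c, hc, P, hP, rfl⟩
    exact neg_IG hc hP

lemma U_mul {c d : ℂ} (hc : c ∈ ({1, -1, Complex.I, -Complex.I} : Set ℂ))
    (hd : d ∈ ({1, -1, Complex.I, -Complex.I} : Set ℂ)) :
    c * d ∈ ({1, -1, Complex.I, -Complex.I} : Set ℂ) := by
  rcases hc with rfl | rfl | rfl | rfl <;> rcases hd with rfl | rfl | rfl | rfl <;> simp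

lemma U_inv {c : ℂ} (hc : c ∈ ({1, -1, Complex.I, -Complex.I} : Set ℂ)) :
    c⁻¹ ∈ ({1, -1, Complex.I, -Complex.I} : Set ℂ) := by
  rcases hc with rfl | rfl | rfl | rfl <;> simp [inv_neg]

lemma PG_smul {m : ℕ} {c : ℂ} (hc : c ∈ ({1, -1, Complex.I, -Complex.I} : Set ℂ)) {A : Mt m}
    (hA : InPauliGroup m A) : InPauliGroup m (c • A) := by
  obtain ⟨d, hd, P, hP, rfl⟩ := PG_iff.1 hA
  rw [smul_smul]
  exact neg_IG (U_mul hc hd) hP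

lemma PG_neg {m : ℕ} {A : Mt m}
    (hA : InPauliGroup m A) : InPauliGroup m (-A) := by
  have := PG_smul (c := -1) (by simp) hA
  simpa using this

lemma PG_sgn {m : ℕ} {A : Mt m} {e : ℂ} (he : e = 1 ∨ e = -1)
    (hA : InPauliGroup m A) : InPauliGroup m (e • A) :=
  PG_smul (by rcases he with rfl | rfl <;> simp) hA

lemma sgn_mul {e f : ℂ} (he : e = 1 ∨ e = -1) (hf : f = 1 ∨ f = -1) :
    e * f = 1 ∨ e * f = -1 := by
  rcases he with rfl | rfl <;> rcases hf with rfl | rfl <;> simp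

lemma kr (m : ℕ) (Q : Matrix (Fin 2) (Fin 2) ℂ)
    (hQ : Q ∈ ({pauliI, pauliX, pauliY, pauliZ} : Set (Matrix (Fin 2) (Fin 2) ℂ))) {B : Mt m}
    (hB : IsPauliString m B) : InPauliGroup (m + 1) (kron Q B) := 
  ⟨0, _, ⟨Q, hQ, B, hB, rfl⟩, by simp⟩

lemma PG_diag {m : ℕ} {A : Mt m} {e : ℂ} (he : e = 1 ∨ e = -1) (hA : InPauliGroup m A) :
    InPauliGroup (m + 1) (blk A 0 0 (e • A)) := by
  obtain ⟨d, hd, P, hP, rfl⟩ := PG_iff.1 hA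
  rcases he with rfl | rfl
  · have := PG_smul hd (kr m pauliI (by simp) hP)
    simpa [kron_blk, pauliI, blk_smul] using this
  · have := PG_smul hd (kr m pauliZ (by simp) hP)
    simpa [kron_blk, pauliZ, blk_smul] using this

lemma PG_anti {m : ℕ} {A : Mt m} {e : ℂ} (he : e = 1 ∨ e = -1) (hA : InPauliGroup m A) :
    InPauliGroup (m + 1) (blk 0 A (e • A) 0) := by
  obtain ⟨d, hd, P, hP, rfl⟩ := PG_iff.1 hA
  rcases he with rfl | rfl
  · have := PG_smul hd (kr m pauliX (by simp) hP)
    simpa [kron_blk, pauliX, blk_smul] using this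
  · have := PG_smul (U_mul (d := Complex.I) hd (by simp)) (kr m pauliY (by simp) hP)
    simp only [kron_blk, pauliY, blk_smul, smul_smul] at this
    convert this using 2 <;> simp [mul_assoc]

lemma PG_cases {m : ℕ} {M : Mt (m + 1)} (hM : InPauliGroup (m + 1) M) :
    ∃ A, InPauliGroup m A ∧ ∃ e : ℂ, (e = 1 ∨ e = -1) ∧
      (M = blk A 0 0 (e • A) ∨ M = blk 0 A (e • A) 0) := by
  obtain ⟨d, hd, _, ⟨Q, hQ, B, hB, rfl⟩, rfl⟩ := PG_iff.1 hM
  rcases hQ with rfl | rfl | rfl | rfl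
  · refine ⟨d • B, neg_IG hd hB, 1, Or.inl rfl, Or.inl ?_⟩
    simp [kron_blk, pauliI, blk_smul]
  · refine ⟨d • B, neg_IG hd hB, 1, Or.inl rfl, Or.inr ?_⟩
    simp [kron_blk, pauliX, blk_smul]
  · refine ⟨(d * -Complex.I) • B, neg_IG (U_mul hd (by simp)) hB, -1, Or.inr rfl, Or.inr ?_⟩
    simp [kron_blk, pauliY, blk_smul, smul_smul]
  · refine ⟨d • B, neg_IG hd hB, -1, Or.inr rfl, Or.inl ?_⟩
    simp [kron_blk, pauliZ, blk_smul]

lemma PG_diag' {m : ℕ} {A : Mt m} {e f : ℂ} (he : e = 1 ∨ e = -1) (hf : f = 1 ∨ f = -1)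
    (hA : InPauliGroup m A) : InPauliGroup (m + 1) (blk (f • A) 0 0 (e • A)) := by
  have := PG_diag (sgn_mul he hf) (PG_sgn hf hA)
  rw [smul_smul] at this
  rcases hf with rfl | rfl <;> simpa using this

lemma PG_anti' {m : ℕ} {A : Mt m} {e f : ℂ} (he : e = 1 ∨ e = -1) (hf : f = 1 ∨ f = -1)
    (hA : InPauliGroup m A) : InPauliGroup (m + 1) (blk 0 (f • A) (e • A) 0) := by
  have := PG_anti (sgn_mul he hf) (PG_sgn hf hA)
  rw [smul_smul] at this
  rcases hf with rfl | rfl <;> simpa using this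

lemma PG_mul : ∀ {m : ℕ} {A B : Mt m}, InPauliGroup m A → InPauliGroup m B →
    InPauliGroup m (A * B)
  | 0, A, B, hA, hB => by
    obtain ⟨c, hc, P, hP, rfl⟩ := PG_iff.1 hA
    obtain ⟨d, hd, Q, hQ, rfl⟩ := PG_iff.1 hB
    have h1 : P = 1 := hP
    subst h1
    simp only [Matrix.smul_mul, one_mul]
    exact PG_smul hc hB
  | m + 1, M, N, hM, hN => by
    obtain ⟨A, hA, e, he, hM'⟩ := PG_cases hM
    obtain ⟨B, hB, f, hf, hN'⟩ := PG_cases hN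
    have hAB := PG_mul hA hB
    have hef := sgn_mul hf he
    rcases hM' with rfl | rfl <;> rcases hN' with rfl | rfl <;> rw [blk_mul] <;>
      simp only [Matrix.smul_mul, Matrix.mul_smul, zero_mul, mul_zero, add_zero, zero_add,
        smul_smul, smul_zero]
    · exact PG_diag hef hAB
    · exact PG_anti hef hAB
    · exact PG_anti' he hf hAB
    · exact PG_diag' he hf hAB

lemma PG_comm : ∀ {m : ℕ} {A B : Mt m}, InPauliGroup m A → InPauliGroup m B →
    ∃ d : ℂ, (d = 1 ∨ d = -1) ∧ A * B = d • (B * A)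
  | 0, A, B, hA, hB => by
    obtain ⟨c, hc, P, hP, rfl⟩ := PG_iff.1 hA
    have h1 : P = 1 := hP
    subst h1
    exact ⟨1, Or.inl rfl, by simp⟩
  | m + 1, M, N, hM, hN => by
    obtain ⟨A, hA, e, he, hM'⟩ := PG_cases hM
    obtain ⟨B, hB, f, hf, hN'⟩ := PG_cases hN
    obtain ⟨d, hd, hAB⟩ := PG_comm hA hB
    have key : ∀ x : ℂ, (x = 1 ∨ x = -1) → M * N = (x * d) • (N * M) → 
        ∃ d : ℂ, (d = 1 ∨ d = -1) ∧ M * N = d • (N * M) := 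
      fun x hx h => ⟨_, sgn_mul hx hd, h⟩
    rcases hM' with rfl | rfl <;> rcases hN' with rfl | rfl
    · refine key 1 (Or.inl rfl) ?_
      simp only [blk_mul, blk_smul, Matrix.smul_mul, Matrix.mul_smul, zero_mul, mul_zero, add_zero,
        zero_add, smul_smul, smul_zero, hAB]
      rw [blk_inj]
      refine ⟨?_, rfl, rfl, ?_⟩ <;> congr 1 <;> ring
    · refine key e he ?_
      simp only [blk_mul, blk_smul, Matrix.smul_mul, Matrix.mul_smul, zero_mul, mul_zero, add_zero,
        zero_add, smul_smul, smul_zero, hAB]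
      rw [blk_inj]
      refine ⟨rfl, ?_, ?_, rfl⟩ <;> congr 1 <;> rcases he with rfl | rfl <;> ring
    · refine key f hf ?_
      simp only [blk_mul, blk_smul, Matrix.smul_mul, Matrix.mul_smul, zero_mul, mul_zero, add_zero,
        zero_add, smul_smul, smul_zero, hAB]
      rw [blk_inj]
      refine ⟨rfl, ?_, ?_, rfl⟩ <;> congr 1 <;> rcases hf with rfl | rfl <;> ring
    · refine key (e * f) (sgn_mul he hf) ?_
      simp only [blk_mul, blk_smul, Matrix.smul_mul, Matrix.mul_smul, zero_mul, mul_zero, add_zero,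
        zero_add, smul_smul, smul_zero, hAB]
      rw [blk_inj]
      refine ⟨?_, rfl, rfl, ?_⟩ <;> congr 1 <;> rcases he with rfl | rfl <;>
        rcases hf with rfl | rfl <;> ring

lemma PS_sq : ∀ {m : ℕ} {P : Mt m}, IsPauliString m P → P * P = 1 ∧ Pᴴ = P
  | 0, P, hP => by
    have h1 : P = 1 := hP
    subst h1; simp
  | m + 1, P, hP => by
    obtain ⟨Q, hQ, B, hB, rfl⟩ := hP
    obtain ⟨h1, h2⟩ := PS_sq hB
    rcases hQ with rfl | rfl | rfl | rfl <;>
      simp [kron_blk, pauliI, pauliX, pauliY, pauliZ, blk_mul, blk_conjTranspose, h1, h2, blk_one,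
        smul_smul]

lemma normSq_eq {ι : Type*} [Fintype ι] (v : ι → ℂ) :
    ((∑ i, Complex.normSq (v i) : ℝ) : ℂ) = star v ⬝ᵥ v := by
  simp [dotProduct, Complex.normSq_eq_conj_mul_self]

lemma PS_norm {m : ℕ} {P : Mt m} (hP : IsPauliString m P) (v : Fin (2 ^ m) → ℂ) :
    ∑ i, Complex.normSq (P.mulVec v i) = ∑ i, Complex.normSq (v i) := by
  obtain ⟨h1, h2⟩ := PS_sq hP
  have : ((∑ i, Complex.normSq (P.mulVec v i) : ℝ) : ℂ) = (∑ i, Complex.normSq (v i) : ℝ) := by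
    rw [normSq_eq, normSq_eq, Matrix.star_mulVec, h2, Matrix.dotProduct_mulVec,
      Matrix.vecMul_vecMul, h1, Matrix.vecMul_one]
  exact_mod_cast this

lemma smul_cancel {ι : Type*} {v : ι → ℂ} (hv : v ≠ 0) {c d : ℂ} (h : c • v = d • v) : c = d :=
  smul_left_injective ℂ hv h

lemma dirac_norm {m : ℕ} (a b : Fin (2 ^ m) → ℂ) :
    ∑ i, Complex.normSq (dirac a b i) =
      ∑ i, Complex.normSq (a i) + ∑ i, Complex.normSq (b i) := by
  rw [dirac_eq, ← (eSum m).sum_comp]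
  simp

/-- `(|0⟩⊗ψ₀ + λ|1⟩⊗Pψ₀)/√2` is a stabilizer state whenever `ψ₀` is, `P` is a Pauli
string and `λ ∈ {1, −1, i, −i}`. Here `m` plays the role of `n − 1`, so the
hypothesis `n ≥ 2` is `1 ≤ m`. -/
theorem dirac_of_stabilizer_is_stabilizer (m : ℕ) (hm : 1 ≤ m)
    (ψ₀ : Fin (2 ^ m) → ℂ) (hψ₀ : IsStabilizerState m ψ₀)
    (P : Matrix (Fin (2 ^ m)) (Fin (2 ^ m)) ℂ) (hP : IsPauliString m P)
    (lam : ℂ) (hlam : lam ∈ ({1, -1, Complex.I, -Complex.I} : Set ℂ)) :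
    IsStabilizerState (m + 1) ((Real.sqrt 2 : ℂ)⁻¹ • dirac ψ₀ (lam • P.mulVec ψ₀)) := by
  obtain ⟨hn, hc⟩ := hψ₀
  obtain ⟨hPP, -⟩ := PS_sq hP
  have hψ : ψ₀ ≠ 0 := by rintro rfl; simp at hn
  have hl0 : lam ≠ 0 := by rcases hlam with rfl | rfl | rfl | rfl <;> simp
  have hl2 : lam * lam = 1 ∨ lam * lam = -1 := by
    rcases hlam with rfl | rfl | rfl | rfl <;> simp
  have hln : Complex.normSq lam = 1 := by
    rcases hlam with rfl | rfl | rfl | rfl <;> simp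
  have hPG : InPauliGroup m P := ⟨0, P, hP, by simp⟩
  refine ⟨?_, ?_⟩
  · simp only [Pi.smul_apply, smul_eq_mul, map_mul, ← Finset.mul_sum]
    rw [dirac_norm]
    simp only [Pi.smul_apply, smul_eq_mul, map_mul, hln, one_mul, PS_norm hP, hn]
    simp
    norm_num
  set S := {A : Mt m | InPauliGroup m A ∧ A.mulVec ψ₀ = ψ₀} with hS
  have hSf : S.Finite := Set.finite_of_ncard_ne_zero (by rw [hc]; positivity)
  have hs2 : ((Real.sqrt 2 : ℂ)⁻¹) ≠ 0 := by simp
  let f : Mt m → Mt (m + 1) := fun s => blk s 0 0 (P * s * P)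
  let g : Mt m → Mt (m + 1) := fun s => blk 0 (lam⁻¹ • (s * P)) (lam • (P * s)) 0
  have hT : {A : Mt (m + 1) | InPauliGroup (m + 1) A ∧
      A.mulVec ((Real.sqrt 2 : ℂ)⁻¹ • dirac ψ₀ (lam • P.mulVec ψ₀)) =
        (Real.sqrt 2 : ℂ)⁻¹ • dirac ψ₀ (lam • P.mulVec ψ₀)} = f '' S ∪ g '' S := by
    ext M
    simp only [Set.mem_ofPred_eq, Set.mem_union, Set.mem_image, Matrix.mulVec_smul]
    rw [(smul_right_injective _ hs2).eq_iff]
    constructor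
    · rintro ⟨hM, hMv⟩
      obtain ⟨A, hA, e, he, rfl | rfl⟩ := PG_cases hM
      · left
        obtain ⟨d, hd, hAB⟩ := PG_comm hPG hA
        have hPAP : P * A * P = d • A := by
          rw [hAB, Matrix.smul_mul, mul_assoc, hPP, mul_one]
        rw [blk_mulVec, dirac_inj] at hMv
        obtain ⟨h1, h2⟩ := hMv
        simp only [Matrix.zero_mulVec, add_zero, zero_add] at h1 h2
        refine ⟨A, ⟨hA, h1⟩, ?_⟩
        have h3 := congrArg (P.mulVec) h2
        simp only [Matrix.mulVec_smul, smv, Matrix.smul_mul, Matrix.mul_smul, zero_mul, Matrix.zero_mulVec, smul_zero, add_zero, Matrix.mulVec_mulVec, ← mul_assoc, hPP,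
          hPAP, Matrix.one_mulVec, h1, smul_smul] at h3
        have h4 := smul_cancel hψ h3
        have h5 : e * d = 1 := by
          apply mul_left_cancel₀ hl0
          linear_combination h4
        have h6 : d = e := by
          rcases he with rfl | rfl <;> linear_combination (norm := ring_nf) h5
          linear_combination -2 * h5
        simp [f, hPAP, h6]
      · right
        obtain ⟨d, hd, hAB⟩ := PG_comm hPG hA
        rw [blk_mulVec, dirac_inj] at hMv
        obtain ⟨h1, h2⟩ := hMv
        simp only [Matrix.zero_mulVec, add_zero, zero_add] at h1 h2
        refine ⟨lam • (A * P), ⟨PG_smul hlam (PG_mul hA hPG), ?_⟩, ?_⟩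
        · rw [smv, ← Matrix.mulVec_mulVec, ← Matrix.mulVec_smul]
          exact h1
        · have h3 := congrArg (P.mulVec) h2
          simp only [Matrix.mulVec_smul, smv, Matrix.smul_mul, Matrix.mul_smul, zero_mul, Matrix.zero_mulVec, smul_zero, add_zero, Matrix.mulVec_mulVec, hPP,
            hAB, Matrix.one_mulVec] at h1 h3
          have h4 : (lam * lam) • ψ₀ = (e * d) • ψ₀ := by
            conv_rhs => rw [← h1]
            rw [mul_smul, ← h3]
            simp only [smul_smul]
            congr 1; ring
          have h5 := smul_cancel hψ h4
          simp only [g, blk_inj, Matrix.smul_mul, Matrix.mul_smul, smul_smul, mul_assoc, hPP,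
            mul_one, true_and, and_true]
          rw [← mul_assoc P, hAB, Matrix.smul_mul, mul_assoc, hPP, mul_one, smul_smul, h5,
            inv_mul_cancel₀ hl0, one_smul]
          refine ⟨rfl, ?_⟩
          congr 1
          rcases hd with rfl | rfl <;> ring
    · rintro (⟨s, ⟨hs, hsv⟩, rfl⟩ | ⟨s, ⟨hs, hsv⟩, rfl⟩)
      · obtain ⟨d, hd, hAB⟩ := PG_comm hPG hs
        constructor
        · have hPAP : P * s * P = d • s := by
            rw [hAB, Matrix.smul_mul, mul_assoc, hPP, mul_one]
          simp only [f, hPAP]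
          exact PG_diag hd hs
        · simp only [f]
          rw [blk_mulVec, dirac_inj]
          simp only [Matrix.zero_mulVec, add_zero, zero_add, hsv, true_and, Matrix.mulVec_smul, zero_mul, smul_zero,
            Matrix.mulVec_mulVec, mul_assoc, hPP, mul_one]
          rw [← Matrix.mulVec_mulVec, hsv]
      · obtain ⟨d, hd, hAB⟩ := PG_comm hPG hs
        constructor
        · have := PG_anti (sgn_mul hl2 hd) (PG_smul (U_inv hlam) (PG_mul hs hPG))
          simp only [g]
          rw [hAB]
          convert this using 2
          rw [smul_smul, smul_smul]
          congr 1
          field_simp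
        · simp only [g]
          rw [blk_mulVec, dirac_inj]
          simp only [Matrix.zero_mulVec, add_zero, zero_add, Matrix.mulVec_smul,
            smv, Matrix.smul_mul, Matrix.mul_smul, zero_mul, Matrix.zero_mulVec, smul_zero, add_zero, Matrix.mulVec_mulVec, mul_assoc, hPP, mul_one, smul_smul,
            inv_mul_cancel₀ hl0, mul_inv_cancel₀ hl0, hsv, one_smul, true_and]
          rw [← Matrix.mulVec_mulVec, hsv]
  have hf : Set.InjOn f S := by
    intro a _ b _ h
    exact (blk_inj.1 h).1
  have hg : Set.InjOn g S := by
    intro a _ b _ h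
    have h1 := congrArg (fun X => P * X) (smul_right_injective _ hl0 (blk_inj.1 h).2.2.1)
    simpa [← mul_assoc, hPP] using h1
  have hdis : Disjoint (f '' S) (g '' S) := by
    rw [Set.disjoint_left]
    rintro _ ⟨a, ⟨_, ha⟩, rfl⟩ ⟨b, _, h⟩
    have := (blk_inj.1 h).1
    subst this
    apply hψ
    rw [← ha]; simp
  have h2 : (f '' S ∪ g '' S).ncard = 2 ^ (m + 1) := by
    rw [Set.ncard_union_eq hdis (hSf.image _) (hSf.image _), hf.ncard_image,
      hg.ncard_image, hc, pow_succ]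
    ring
  rw [hT, h2]
end
end

section
/- Let G = (V, E) be a finite simple graph with |V| = N, let S ⊆ V, and let M be a nonempty (S, V∖S)-strong matching in G. Order the vertices of V so that all vertices of S come first, and define g : {0,1}^N → ℂ by g(x) = (−1)^{f_G(x)}, where f_G(x) is the number of edges of G whose both endpoints are assigned value 1 by x (under the chosen vertex order). Then g has at least 2^|M| pairwise distinct subfunctions of order |S|. -/
open Matrix

noncomputable section

theorem sm_key {V : Type*} (G : SimpleGraph V) (S : Set V) (M A : Set (Sym2 V))
    (hM : IsSTStrongMatching G S Sᶜ M) (hA : A ⊆ M) (u w : V) (hu : u ∈ S) (hw : w ∉ S)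
    (h0 : s(u, w) ∈ M) (P : V → Prop)
    (hP : ∀ v, P v ↔ (v ∈ S ∧ ∃ e ∈ A, v ∈ e) ∨ (v ∉ S ∧ v = w)) (e : Sym2 V) :
    (e ∈ G.edgeSet ∧ ∀ v ∈ e, P v) ↔ (e = s(u, w) ∧ s(u, w) ∈ A) := by
  obtain ⟨⟨h1, h2, h3⟩, h4⟩ := hM
  constructor
  · rintro ⟨he, hv⟩
    have heM : e ∈ M := by
      refine h3 e he fun v hve => ?_
      rcases (hP v).1 (hv v hve) with ⟨_, e', he', hve'⟩ | ⟨_, rfl⟩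
      · exact ⟨e', hA he', hve'⟩
      · exact ⟨_, h0, by simp⟩
    obtain ⟨u', hu', w', hw', rfl⟩ := h4 e heM
    have hww : w' = w := by
      rcases (hP w').1 (hv w' (by simp)) with h | h
      · exact absurd h.1 hw'
      · exact h.2
    subst hww
    have heq : s(u', w') = s(u, w') := by
      by_contra hne
      exact h2 _ heM _ h0 hne w' (by simp) (by simp)
    refine ⟨heq, ?_⟩
    rw [← heq]
    rcases (hP u').1 (hv u' (by simp)) with ⟨_, e', he', hve'⟩ | h
    · have : e' = s(u', w') := by
        by_contra hne
        exact h2 _ (hA he') _ heM hne u' hve' (by simp)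
      exact this ▸ he'
    · exact absurd hu' h.1
  · rintro ⟨rfl, hA0⟩
    refine ⟨h1 h0, fun v hv => (hP v).2 ?_⟩
    rcases Sym2.mem_iff.1 hv with rfl | rfl
    · exact Or.inl ⟨hu, _, hA0, by simp⟩
    · exact Or.inr ⟨hw, rfl⟩

/-- A nonempty `(S, V∖S)`-strong matching `M` forces at least `2^|M|` distinct
subfunctions of order `|S|` of the graph-state sign function, under any vertex
order placing `S` first. -/
theorem strong_matching_yields_subfunctions (V : Type*) [Fintype V]
    (G : SimpleGraph V) (S : Set V) (M : Set (Sym2 V))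
    (hM : IsSTStrongMatching G S Sᶜ M) (hMne : M.Nonempty)
    (σ : Fin (Fintype.card V) ≃ V)
    (hσ : ∀ i : Fin (Fintype.card V), σ i ∈ S ↔ (i : ℕ) < S.ncard) :
    2 ^ M.ncard ≤
      Set.ncard {h : (Fin (Fintype.card V - S.ncard) → Bool) → ℂ |
        ∃ a : Fin S.ncard → Bool,
          h = subfun (fun x : Fin (Fintype.card V) → Bool =>
              (-1 : ℂ) ^ Set.ncard {e ∈ G.edgeSet | ∀ v ∈ e, x (σ.symm v) = true})
            S.ncard a} := by
  classical
  have hle : S.ncard ≤ Fintype.card V := by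
    rw [← Nat.card_eq_fintype_card]; exact Set.ncard_le_card S
  let g : (Fin (Fintype.card V) → Bool) → ℂ := fun x =>
    (-1 : ℂ) ^ Set.ncard {e ∈ G.edgeSet | ∀ v ∈ e, x (σ.symm v) = true}
  let α : Set (Sym2 V) → Fin S.ncard → Bool := fun A i =>
    decide (∃ e ∈ A, σ (Fin.castLE hle i) ∈ e)
  have hval : ∀ A ⊆ M, ∀ u ∈ S, ∀ w ∉ S, s(u, w) ∈ M →
      subfun g S.ncard (α A)
        (fun j => decide (σ ⟨(j : ℕ) + S.ncard, by have := j.isLt; omega⟩ = w)) =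
      if s(u, w) ∈ A then -1 else 1 := by
    intro A hA u hu w hw h0
    unfold subfun
    have key := sm_key G S M A hM hA u w hu hw h0
    generalize hy : (fun i : Fin (Fintype.card V) => (_ : Bool)) = y
    change (-1 : ℂ) ^ Set.ncard {e ∈ G.edgeSet | ∀ v ∈ e, y (σ.symm v) = true} = _
    have hP : ∀ v, (y (σ.symm v) = true) ↔
        (v ∈ S ∧ ∃ e ∈ A, v ∈ e) ∨ (v ∉ S ∧ v = w) := by
      intro v
      obtain ⟨i, rfl⟩ := σ.surjective v
      rw [← hy]
      by_cases hi : (i : ℕ) < S.ncard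
      · have hS := (hσ i).2 hi
        simp [hi, hS, α]
      · have hS : σ i ∉ S := fun h => hi ((hσ i).1 h)
        have : (i : ℕ) - S.ncard + S.ncard = i := by omega
        simp [hi, hS, this]
    have hset : {e ∈ G.edgeSet | ∀ v ∈ e, y (σ.symm v) = true} =
        if s(u, w) ∈ A then {s(u, w)} else ∅ := by
      ext e
      have := key _ hP e
      rw [Set.mem_setOf_eq, this]
      split_ifs with h <;> simp [h]
    rw [hset]
    split_ifs <;> simp
  rw [← Set.ncard_powerset M (Set.toFinite M)]
  refine Set.ncard_le_ncard_of_injOn (fun A => subfun g S.ncard (α A)) ?_ ?_ ?_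
  · intro A _
    exact ⟨α A, rfl⟩
  · intro A hA B hB hAB
    have hiff : ∀ e ∈ M, (e ∈ A ↔ e ∈ B) := by
      intro e he
      obtain ⟨u, hu, w, hw, rfl⟩ := hM.2 e he
      have h1 := hval A hA u hu w hw he
      have h2 := hval B hB u hu w hw he
      have h3 := congrFun hAB
        (fun j => decide (σ ⟨(j : ℕ) + S.ncard, by have := j.isLt; omega⟩ = w))
      simp only at h3
      rw [h1, h2] at h3
      by_cases hA' : s(u, w) ∈ A <;> by_cases hB' : s(u, w) ∈ B <;>
        simp [hA', hB'] at h3 ⊢ <;> norm_num at h3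
    ext e
    exact ⟨fun h => (hiff e (hA h)).1 h, fun h => (hiff e (hB h)).2 h⟩
  · refine (Set.finite_range (fun a : Fin S.ncard → Bool => subfun g S.ncard a)).subset ?_
    rintro h ⟨a, rfl⟩
    exact ⟨a, rfl⟩
end
end

section
/- Let n ≥ 1 and let S be a set of ⌊n²/2⌋ vertices of the n×n grid graph with vertex set V. Then the n×n grid graph contains an (S, V∖S)-strong matching of size at least ⌊n/12⌋. -/
open Matrix

noncomputable section

lemma aux_change {n : ℕ} (P : Fin n → Prop) (a b : Fin n) (ha : P a) (hb : ¬ P b) :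
    ∃ c d : Fin n, (c : ℕ) + 1 = d ∧ (P c ↔ ¬ P d) := by
  by_contra hcon
  push Not at hcon
  have hstep : ∀ c d : Fin n, (c : ℕ) + 1 = d → (P c ↔ P d) := by
    intro c d h
    have := hcon c d h
    tauto
  have hall : ∀ k : ℕ, ∀ hk : k < n, (P ⟨k, hk⟩ ↔ P ⟨0, by omega⟩) := by
    intro k
    induction k with
    | zero => intro hk; rfl
    | succ k ih =>
      intro hk
      rw [← ih (by omega)]
      exact (hstep ⟨k, by omega⟩ ⟨k + 1, hk⟩ rfl).symm
  have h1 := hall a.1 a.2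
  have h2 := hall b.1 b.2
  exact hb (h2.2 (h1.1 ha))

open Classical in
lemma aux_rows {n : ℕ} (S : Set (Fin n × Fin n)) (g : Fin n → Fin n → Fin n × Fin n)
    (hinj : ∀ i j i' j', g i j = g i' j' → i = i' ∧ j = j')
    (hadj : ∀ i j i' j', (gridGraph n).Adj (g i j) (g i' j') ↔
      ((i = i' ∧ ((j : ℕ) + 1 = j' ∨ (j' : ℕ) + 1 = j)) ∨
       (j = j' ∧ ((i : ℕ) + 1 = i' ∨ (i' : ℕ) + 1 = i))))
    (R : Finset (Fin n)) (hR : ∀ i ∈ R, (∃ a, g i a ∈ S) ∧ ∃ b, g i b ∉ S) :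
    ∃ M : Set (Sym2 (Fin n × Fin n)),
      IsSTStrongMatching (gridGraph n) S Sᶜ M ∧ R.card ≤ 2 * M.ncard := by
  have hch : ∀ i : Fin n, ∃ c d : Fin n, i ∈ R →
      ((c : ℕ) + 1 = d ∧ (g i c ∈ S ↔ ¬ g i d ∈ S)) := by
    intro i
    by_cases hi : i ∈ R
    · obtain ⟨⟨a, ha⟩, b, hb⟩ := hR i hi
      obtain ⟨c, d, h⟩ := aux_change (fun j => g i j ∈ S) a b ha hb
      exact ⟨c, d, fun _ => h⟩
    · exact ⟨i, i, fun h => absurd h hi⟩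
  choose c d hcd using hch
  have hpar : ∃ p : ℕ, R.card ≤ 2 * (R.filter (fun i : Fin n => (i : ℕ) % 2 = p)).card := by
    have h := Finset.card_filter_add_card_filter_not (s := R) (fun i : Fin n => (i : ℕ) % 2 = 0)
    have h2 : R.filter (fun i : Fin n => ¬ (i : ℕ) % 2 = 0) = R.filter (fun i : Fin n => (i : ℕ) % 2 = 1) := by
      apply Finset.filter_congr
      intro i _
      omega
    rw [h2] at h
    by_cases h3 : R.card ≤ 2 * (R.filter (fun i : Fin n => (i : ℕ) % 2 = 0)).card
    · exact ⟨0, h3⟩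
    · exact ⟨1, by omega⟩
  obtain ⟨p, hp⟩ := hpar
  set Q := R.filter (fun i : Fin n => (i : ℕ) % 2 = p) with hQ
  have hQR : ∀ i ∈ Q, i ∈ R ∧ (i : ℕ) % 2 = p := by
    intro i hi
    simpa [hQ] using hi
  let f : Fin n → Sym2 (Fin n × Fin n) := fun i => s(g i (c i), g i (d i))
  have hmem : ∀ i v, v ∈ f i → ∃ j, v = g i j ∧ (j = c i ∨ j = d i) := by
    intro i v hv
    rcases Sym2.mem_iff.1 hv with h | h
    · exact ⟨_, h, Or.inl rfl⟩
    · exact ⟨_, h, Or.inr rfl⟩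
  have hdisj : ∀ i i' v, v ∈ f i → v ∈ f i' → i = i' := by
    intro i i' v h h'
    obtain ⟨j, hj, -⟩ := hmem i v h
    obtain ⟨j', hj', -⟩ := hmem i' v h'
    exact (hinj _ _ _ _ (hj.symm.trans hj')).1
  have hfinj : Function.Injective f := by
    intro i i' h
    have h1 : g i (c i) ∈ f i := Sym2.mem_mk_left _ _
    exact hdisj i i' _ h1 (h ▸ h1)
  refine ⟨f '' (Q : Set (Fin n)), ⟨⟨?_, ?_, ?_⟩, ?_⟩, ?_⟩
  · rintro _ ⟨i, hi, rfl⟩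
    have := hcd i (hQR i hi).1
    exact (hadj _ _ _ _).2 (Or.inl ⟨rfl, Or.inl this.1⟩)
  · rintro _ ⟨i, hi, rfl⟩ _ ⟨i', hi', rfl⟩ hne v hv hv'
    exact hne (congrArg f (hdisj i i' v hv hv'))
  · intro e
    induction e using Sym2.ind with
    | _ u v =>
    intro he hcov
    obtain ⟨_, ⟨i, hi, rfl⟩, hu⟩ := hcov u (Sym2.mem_mk_left _ _)
    obtain ⟨_, ⟨i', hi', rfl⟩, hv⟩ := hcov v (Sym2.mem_mk_right _ _)
    obtain ⟨j, rfl, hj⟩ := hmem i u hu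
    obtain ⟨j', rfl, hj'⟩ := hmem i' v hv
    have h1 := hQR i hi
    have h2 := hQR i' hi'
    have he' := (hadj i j i' j').1 he
    rcases he' with ⟨rfl, h⟩ | ⟨_, h⟩
    · refine ⟨i, hi, ?_⟩
      rcases hj with rfl | rfl <;> rcases hj' with rfl | rfl
      · omega
      · rfl
      · exact Sym2.eq_swap
      · omega
    · omega
  · rintro _ ⟨i, hi, rfl⟩
    have h := (hcd i (hQR i hi).1).2
    by_cases hc : g i (c i) ∈ S
    · exact ⟨_, hc, _, h.1 hc, rfl⟩
    · exact ⟨g i (d i), by tauto, g i (c i), hc, Sym2.eq_swap⟩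
  · rw [Set.ncard_image_of_injective _ hfinj, Set.ncard_coe_finset]
    exact hp

lemma aux_card {n : ℕ} (T : Set (Fin n × Fin n)) (R : Finset (Fin n))
    (h : ∀ i ∈ R, ∀ j, (i, j) ∈ T) : R.card * n ≤ T.ncard := by
  have h1 : ((R ×ˢ (Finset.univ : Finset (Fin n)) : Finset (Fin n × Fin n)) :
      Set (Fin n × Fin n)) ⊆ T := by
    rintro ⟨i, j⟩ hij
    simp at hij
    exact h i hij j
  have h2 := Set.ncard_le_ncard h1 (Set.toFinite T)
  rw [Set.ncard_coe_finset, Finset.card_product] at h2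
  simpa using h2

/-- Any half of the vertices of the `n × n` grid graph admits an `(S, Sᶜ)`-strong
matching of size at least `⌊n/12⌋`. -/
theorem grid_graph_large_strong_matching (n : ℕ) (hn : 1 ≤ n)
    (S : Set (Fin n × Fin n)) (hS : S.ncard = n ^ 2 / 2) :
    ∃ M : Set (Sym2 (Fin n × Fin n)),
      IsSTStrongMatching (gridGraph n) S Sᶜ M ∧ n / 12 ≤ M.ncard := by
  classical
  have hadj1 : ∀ i j i' j' : Fin n, (gridGraph n).Adj (i, j) (i', j') ↔
      ((i = i' ∧ ((j : ℕ) + 1 = j' ∨ (j' : ℕ) + 1 = j)) ∨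
       (j = j' ∧ ((i : ℕ) + 1 = i' ∨ (i' : ℕ) + 1 = i))) := by
    intro i j i' j'
    simp only [gridGraph, SimpleGraph.fromRel_adj, ne_eq, Prod.mk.injEq, Fin.ext_iff]
    omega
  by_cases hboth : (∃ i, ∀ j, (i, j) ∈ S) ∧ (∃ i, ∀ j, (i, j) ∉ S)
  · obtain ⟨⟨a, ha⟩, b, hb⟩ := hboth
    obtain ⟨M, hM, hc⟩ := aux_rows S (fun i j => (j, i))
      (by intro i j i' j' h; simp at h; exact ⟨h.2, h.1⟩)
      (by intro i j i' j'; rw [hadj1]; tauto) Finset.univ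
      (fun i _ => ⟨⟨a, ha i⟩, b, hb i⟩)
    rw [Finset.card_univ, Fintype.card_fin] at hc
    exact ⟨M, hM, by omega⟩
  · set R : Finset (Fin n) :=
      Finset.univ.filter (fun i => (∃ a, (i, a) ∈ S) ∧ ∃ b, (i, b) ∉ S) with hR
    obtain ⟨M, hM, hc⟩ := aux_rows S (fun i j => (i, j))
      (by intro i j i' j' h; simpa using h) hadj1 R
      (by intro i hi; simpa [hR] using hi)
    refine ⟨M, hM, ?_⟩
    have hRc : Rᶜ.card + R.card = n := by
      rw [Finset.card_compl, Fintype.card_fin]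
      have := Finset.card_le_univ R
      rw [Fintype.card_fin] at this
      omega
    have hScard := Set.ncard_add_ncard_compl S
    rw [Nat.card_prod, Nat.card_fin] at hScard
    have hnon : ∀ i ∈ Rᶜ, (∀ j, (i, j) ∉ S) ∨ (∀ j, (i, j) ∈ S) := by
      intro i hi
      simp only [hR, Finset.mem_compl, Finset.mem_filter, Finset.mem_univ, true_and] at hi
      by_contra hcon
      push Not at hcon hi
      obtain ⟨⟨a, ha⟩, b, hb⟩ := hcon
      exact hb (hi ⟨a, ha⟩ b)
    have hle : Rᶜ.card * n ≤ (n ^ 2 + 1) / 2 := by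
      have hsq : n ^ 2 = n * n := sq n
      by_cases h1 : ∃ i, ∀ j, (i, j) ∈ S
      · have := aux_card S Rᶜ (fun i hi => (hnon i hi).resolve_left (fun h => hboth ⟨h1, i, h⟩))
        omega
      · have := aux_card Sᶜ Rᶜ (fun i hi => (hnon i hi).resolve_right (fun h => h1 ⟨i, h⟩))
        omega
    by_contra hlt
    have h1 : 12 ≤ n := by omega
    have h2 : 5 * n ≤ 6 * Rᶜ.card := by omega
    have h3 : 5 * n * n ≤ 6 * Rᶜ.card * n := Nat.mul_le_mul_right n h2
    have h4 : 2 * (Rᶜ.card * n) ≤ n ^ 2 + 1 := by omega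
    nlinarith
end
end

section
/- Let n ≥ 1 and N = n². For every bijection σ from {1,…,N} to the vertex set of the n×n grid graph, define g : {0,1}^N → ℂ by g(x) = (−1)^{m(x)}, where m(x) is the number of grid edges {u, v} with x_{σ^{-1}(u)} = x_{σ^{-1}(v)} = 1. Then g has at least 2^{⌊n/12⌋} pairwise distinct subfunctions of order ⌊N/2⌋. -/
open Matrix

noncomputable section

lemma edges_insert_of_adj {V : Type*} (G : SimpleGraph V) (X : Set V) (u w : V)
    (hu : u ∈ X) (ha : G.Adj u w) (huniq : ∀ v ∈ X, G.Adj v w → v = u) :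
    {e ∈ G.edgeSet | ∀ v ∈ e, v ∈ insert w X} =
      insert s(u, w) {e ∈ G.edgeSet | ∀ v ∈ e, v ∈ X} := by
  ext e
  induction e using Sym2.ind with
  | _ a b =>
    simp only [Set.mem_setOf_eq, SimpleGraph.mem_edgeSet, Sym2.mem_iff, Set.mem_insert_iff,
      forall_eq_or_imp, forall_eq, Sym2.eq_iff]
    constructor
    · rintro ⟨hab, rfl | ha', rfl | hb'⟩
      · exact absurd rfl hab.ne
      · exact Or.inl (Or.inr ⟨rfl, huniq _ hb' hab.symm⟩)
      · exact Or.inl (Or.inl ⟨huniq _ ha' hab, rfl⟩)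
      · exact Or.inr ⟨hab, ha', hb'⟩
    · rintro ((⟨rfl, rfl⟩ | ⟨rfl, rfl⟩) | ⟨hab, h1, h2⟩)
      · exact ⟨ha, Or.inr hu, Or.inl rfl⟩
      · exact ⟨ha.symm, Or.inl rfl, Or.inr hu⟩
      · exact ⟨hab, Or.inr h1, Or.inr h2⟩

lemma edges_insert_of_not_adj {V : Type*} (G : SimpleGraph V) (X : Set V) (w : V)
    (hno : ∀ v ∈ X, ¬ G.Adj v w) :
    {e ∈ G.edgeSet | ∀ v ∈ e, v ∈ insert w X} =
      {e ∈ G.edgeSet | ∀ v ∈ e, v ∈ X} := by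
  ext e
  induction e using Sym2.ind with
  | _ a b =>
    simp only [Set.mem_setOf_eq, SimpleGraph.mem_edgeSet, Sym2.mem_iff, Set.mem_insert_iff,
      forall_eq_or_imp, forall_eq]
    constructor
    · rintro ⟨hab, rfl | ha', rfl | hb'⟩
      · exact absurd rfl hab.ne
      · exact absurd hab.symm (hno _ hb')
      · exact absurd hab (hno _ ha')
      · exact ⟨hab, ha', hb'⟩
    · rintro ⟨hab, h1, h2⟩
      exact ⟨hab, Or.inr h1, Or.inr h2⟩

open Classical in
lemma sign_insert {V : Type*} [Finite V] (G : SimpleGraph V) {ι : Type*} (u w : ι → V)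
    (hadj : ∀ i j, G.Adj (u i) (w j) ↔ i = j) (hw : ∀ i j, u i ≠ w j) (A : Set ι) (i : ι) :
    (-1 : ℂ) ^ Set.ncard {e ∈ G.edgeSet | ∀ v ∈ e, v ∈ insert (w i) (u '' A)} =
      (-1 : ℂ) ^ Set.ncard {e ∈ G.edgeSet | ∀ v ∈ e, v ∈ u '' A} *
        (if i ∈ A then -1 else 1) := by
  split_ifs with h
  · rw [edges_insert_of_adj G (u '' A) (u i) (w i) ⟨i, h, rfl⟩ ((hadj i i).2 rfl),
      Set.ncard_insert_of_notMem, pow_succ]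
    · rintro ⟨-, h2⟩
      obtain ⟨j, -, hj⟩ := h2 (w i) (by simp)
      exact hw _ _ hj
    · rintro _ ⟨j, hj, rfl⟩ h2
      rw [(hadj _ _).1 h2]
  · rw [edges_insert_of_not_adj, mul_one]
    rintro _ ⟨j, hj, rfl⟩ h2
    exact h ((hadj _ _).1 h2 ▸ hj)

open Classical in
lemma many_of_matching {N : ℕ} {V : Type*} [Finite V] (G : SimpleGraph V) (ℓ : ℕ)
    (σ : Fin N ≃ V) {ι : Type*} [Fintype ι] (u w : ι → V)
    (hu : ∀ i, (σ.symm (u i) : ℕ) < ℓ) (hw : ∀ i, ¬ (σ.symm (w i) : ℕ) < ℓ)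
    (hadj : ∀ i j, G.Adj (u i) (w j) ↔ i = j) :
    2 ^ (Fintype.card ι) ≤
      Set.ncard {h : (Fin (N - ℓ) → Bool) → ℂ |
        ∃ a : Fin ℓ → Bool,
          h = subfun (fun x : Fin N → Bool =>
              (-1 : ℂ) ^ Set.ncard {e ∈ G.edgeSet | ∀ v ∈ e, x (σ.symm v) = true}) ℓ a} := by
  set g : (Fin N → Bool) → ℂ := fun x : Fin N → Bool =>
              (-1 : ℂ) ^ Set.ncard {e ∈ G.edgeSet | ∀ v ∈ e, x (σ.symm v) = true} with hg
  have hne : ∀ i j, u i ≠ w j := fun i j h => hw j (h ▸ hu i)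
  let asg : Set ι → Fin ℓ → Bool := fun A k => decide (∃ i ∈ A, (σ.symm (u i) : ℕ) = k)
  let F : Set ι → ((Fin (N - ℓ) → Bool) → ℂ) := fun A => subfun g ℓ (asg A)
  have key0 : ∀ A, F A (fun _ => false) =
      (-1 : ℂ) ^ Set.ncard {e ∈ G.edgeSet | ∀ v ∈ e, v ∈ u '' A} := by
    intro A
    simp only [F, subfun, hg]
    congr 3
    ext e
    refine and_congr_right fun _ => forall₂_congr fun v _ => ?_
    split_ifs with h
    · simp only [asg, decide_eq_true_eq, Set.mem_image]
      refine exists_congr fun i => and_congr_right fun _ => ?_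
      rw [← Fin.ext_iff, σ.symm.injective.eq_iff]
    · simp only [Bool.false_eq_true, false_iff]
      rintro ⟨i, -, rfl⟩
      exact h (hu i)
  have key1 : ∀ A i, F A (fun k => decide ((k : ℕ) + ℓ = σ.symm (w i))) =
      (-1 : ℂ) ^ Set.ncard {e ∈ G.edgeSet | ∀ v ∈ e, v ∈ insert (w i) (u '' A)} := by
    intro A j
    simp only [F, subfun, hg]
    congr 3
    ext e
    refine and_congr_right fun _ => forall₂_congr fun v _ => ?_
    rw [Set.mem_insert_iff]
    split_ifs with h
    · have hv : v ≠ w j := by rintro rfl; exact hw j h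
      simp only [asg, decide_eq_true_eq, Set.mem_image, hv, false_or]
      refine exists_congr fun i => and_congr_right fun _ => ?_
      rw [← Fin.ext_iff, σ.symm.injective.eq_iff]
    · have hv : v ∉ u '' A := by
        rintro ⟨i, -, rfl⟩
        exact h (hu i)
      simp only [decide_eq_true_eq, hv, or_false]
      rw [Nat.sub_add_cancel (not_lt.1 h), ← Fin.ext_iff, σ.symm.injective.eq_iff]
  have hinj : Function.Injective F := by
    intro A B hAB
    ext i
    have h0 := congrFun hAB (fun _ => false)
    have h1 := congrFun hAB (fun k => decide ((k : ℕ) + ℓ = σ.symm (w i)))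
    rw [key0, key0] at h0
    rw [key1, key1, sign_insert G u w hadj hne, sign_insert G u w hadj hne, h0] at h1
    have h2 := mul_left_cancel₀ (pow_ne_zero _ (by norm_num)) h1
    by_cases hA : i ∈ A <;> by_cases hB : i ∈ B <;> simp [hA, hB] at h2 ⊢ <;> norm_num at h2
  have hfin : Set.Finite {h : (Fin (N - ℓ) → Bool) → ℂ | ∃ a : Fin ℓ → Bool, h = subfun g ℓ a} := by
    refine (Set.finite_range (fun a : Fin ℓ → Bool => subfun g ℓ a)).subset ?_
    rintro _ ⟨a, rfl⟩
    exact ⟨a, rfl⟩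
  calc 2 ^ (Fintype.card ι) = Nat.card (Set ι) := by simp
    _ = (Set.range F).ncard := by
      rw [← Set.image_univ, Set.ncard_image_of_injective _ hinj, Set.ncard_univ]
    _ ≤ _ := Set.ncard_le_ncard (by rintro _ ⟨A, rfl⟩; exact ⟨_, rfl⟩) hfin

lemma exists_change {n : ℕ} (q : Fin n → Prop) (h1 : ∃ j, q j) (h2 : ∃ j, ¬ q j) :
    ∃ a b : Fin n, ((a : ℕ) + 1 = b ∨ (b : ℕ) + 1 = a) ∧ q a ∧ ¬ q b := by
  by_contra! hc
  obtain ⟨j, hj⟩ := h1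
  obtain ⟨k, hk⟩ := h2
  have hn : 0 < n := j.pos
  have : ∀ m (hm : m < n), q ⟨m, hm⟩ ↔ q ⟨0, hn⟩ := by
    intro m
    induction m with
    | zero => intro _; rfl
    | succ m ih =>
      intro hm
      rw [← ih (by omega)]
      exact ⟨fun h => hc _ _ (Or.inr rfl) h, fun h => hc _ _ (Or.inl rfl) h⟩
  exact hk ((this k k.2).2 ((this j j.2).1 hj))

lemma grid_adj {n : ℕ} (u v : Fin n × Fin n) : (gridGraph n).Adj u v ↔
    (u.1 = v.1 ∧ ((u.2 : ℕ) + 1 = v.2 ∨ (v.2 : ℕ) + 1 = u.2)) ∨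
    (u.2 = v.2 ∧ ((u.1 : ℕ) + 1 = v.1 ∨ (v.1 : ℕ) + 1 = u.1)) := by
  simp only [gridGraph, SimpleGraph.fromRel_adj]
  constructor
  · rintro ⟨-, (⟨h, h'⟩ | ⟨h, h'⟩) | (⟨h, h'⟩ | ⟨h, h'⟩)⟩ <;> simp [h, h']
  · intro h
    refine ⟨?_, ?_⟩
    · rintro rfl
      omega
    · rcases h with ⟨h, h' | h'⟩ | ⟨h, h' | h'⟩ <;> simp [h, h']

open Classical in
lemma exists_parity {n : ℕ} (R : Finset (Fin n)) :
    ∃ c, (R.card + 1) / 2 ≤ (R.filter (fun r : Fin n => (r : ℕ) % 2 = c)).card := by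
  have h := Finset.card_filter_add_card_filter_not (s := R) (fun r => (r : ℕ) % 2 = 0)
  have h' : R.filter (fun r : Fin n => ¬ (r : ℕ) % 2 = 0) = R.filter (fun r : Fin n => (r : ℕ) % 2 = 1) := by
    ext r; simp
  rw [h'] at h
  by_cases hh : (R.card + 1) / 2 ≤ (R.filter (fun r : Fin n => (r : ℕ) % 2 = 0)).card
  · exact ⟨0, hh⟩
  · exact ⟨1, by omega⟩

lemma many_of_lines {n ℓ : ℕ} (σ : Fin (n ^ 2) ≃ (Fin n × Fin n)) (f : Fin n × Fin n → Fin n)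
    (hf : ∀ u v, (gridGraph n).Adj u v → (f u : ℕ) ≤ f v + 1 ∧ (f v : ℕ) ≤ f u + 1)
    (R : Finset (Fin n))
    (hR : ∀ r ∈ R, ∃ u w, f u = r ∧ f w = r ∧ (σ.symm u : ℕ) < ℓ ∧ ¬ (σ.symm w : ℕ) < ℓ ∧
      (gridGraph n).Adj u w) (k : ℕ) (hk : k ≤ (R.card + 1) / 2) :
    2 ^ k ≤
      Set.ncard {h : (Fin (n ^ 2 - ℓ) → Bool) → ℂ |
        ∃ a : Fin ℓ → Bool,
          h = subfun (fun x : Fin (n ^ 2) → Bool =>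
              (-1 : ℂ) ^ Set.ncard {e ∈ (gridGraph n).edgeSet |
                ∀ v ∈ e, x (σ.symm v) = true}) ℓ a} := by
  classical
  obtain ⟨c, hc⟩ := exists_parity R
  have hR' : ∀ r : {r // r ∈ R.filter (fun r : Fin n => (r : ℕ) % 2 = c)}, ∃ u w, f u = r ∧ f w = r ∧
      (σ.symm u : ℕ) < ℓ ∧ ¬ (σ.symm w : ℕ) < ℓ ∧ (gridGraph n).Adj u w :=
    fun r => hR r (Finset.mem_filter.1 r.2).1
  choose u w h1 h2 h3 h4 h5 using hR'
  refine le_trans ?_ (many_of_matching (gridGraph n) ℓ σ u w h3 h4 ?_)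
  · rw [Fintype.card_coe]
    exact Nat.pow_le_pow_right (by norm_num) (hk.trans hc)
  · intro i j
    refine ⟨fun h => ?_, fun h => h ▸ h5 i⟩
    have := hf _ _ h
    rw [h1, h2] at this
    have hi := (Finset.mem_filter.1 i.2).2
    have hj := (Finset.mem_filter.1 j.2).2
    apply Subtype.ext
    apply Fin.ext
    omega

open Classical in
lemma card_lines {n : ℕ} (p : Fin n × Fin n → Prop) (j : Fin n) (hj : ∀ i, ¬ p (i, j))
    (hp : n ^ 2 / 2 ≤ (Finset.univ.filter p).card) :
    n ≤ 2 * (Finset.univ.filter (fun i => (∃ j, p (i, j)) ∧ ∃ j, ¬ p (i, j))).card + 1 := by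
  set R := Finset.univ.filter (fun i => (∃ j, p (i, j)) ∧ ∃ j, ¬ p (i, j))
  have hsub : Finset.univ.filter p ⊆ R ×ˢ Finset.univ := by
    rintro ⟨a, b⟩ h
    simp only [Finset.mem_filter, Finset.mem_univ, true_and] at h
    simp only [Finset.mem_product, Finset.mem_univ, and_true, R, Finset.mem_filter, true_and]
    exact ⟨⟨b, h⟩, ⟨j, hj a⟩⟩
  have h := hp.trans (Finset.card_le_card hsub)
  rw [Finset.card_product, Finset.card_univ, Fintype.card_fin] at h
  by_contra! hlt
  have h2 : n ^ 2 ≤ 2 * (R.card * n) + 1 := by omega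
  nlinarith

/-- For any variable order, the sign function of the `n × n` cluster state has at
least `2^⌊n/12⌋` distinct subfunctions of order `⌊n²/2⌋`. -/
theorem cluster_state_many_subfunctions (n : ℕ) (hn : 1 ≤ n)
    (σ : Fin (n ^ 2) ≃ (Fin n × Fin n)) :
    2 ^ (n / 12) ≤
      Set.ncard {h : (Fin (n ^ 2 - n ^ 2 / 2) → Bool) → ℂ |
        ∃ a : Fin (n ^ 2 / 2) → Bool,
          h = subfun (fun x : Fin (n ^ 2) → Bool =>
              (-1 : ℂ) ^ Set.ncard {e ∈ (gridGraph n).edgeSet |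
                ∀ v ∈ e, x (σ.symm v) = true})
            (n ^ 2 / 2) a} := by
  classical
  let p : Fin n × Fin n → Prop := fun v => (σ.symm v : ℕ) < n ^ 2 / 2
  have hcp : (Finset.univ.filter p).card = n ^ 2 / 2 := by
    have : Finset.univ.filter p =
        (Finset.univ.filter (fun i : Fin (n ^ 2) => (i : ℕ) < n ^ 2 / 2)).map σ.toEmbedding := by
      ext v
      simp only [Finset.mem_filter, Finset.mem_univ, true_and, Finset.mem_map_equiv, p]
    rw [this, Finset.card_map, Fin.card_filter_val_lt]
    exact min_eq_right (Nat.div_le_self _ _)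
  have hcnp : n ^ 2 / 2 ≤ (Finset.univ.filter (fun v => ¬ p v)).card := by
    have h := Finset.card_filter_add_card_filter_not (s := Finset.univ) p
    rw [hcp, Finset.card_univ, Fintype.card_prod, Fintype.card_fin, ← sq] at h
    omega
  by_cases hcol : ∀ j, (∃ i, p (i, j)) ∧ ∃ i, ¬ p (i, j)
  · refine many_of_lines σ Prod.snd ?_ Finset.univ ?_ _ ?_
    · intro u v h
      rw [grid_adj] at h
      omega
    · intro j _
      obtain ⟨a, b, hab, ha, hb⟩ := exists_change (fun i => p (i, j)) (hcol j).1 (hcol j).2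
      exact ⟨(a, j), (b, j), rfl, rfl, ha, hb, (grid_adj _ _).2 (Or.inr ⟨rfl, hab⟩)⟩
    · rw [Finset.card_univ, Fintype.card_fin]
      omega
  · have hn' : n ≤ 2 * (Finset.univ.filter
        (fun i => (∃ j, p (i, j)) ∧ ∃ j, ¬ p (i, j))).card + 1 := by
      simp only [not_forall, not_and_or, not_exists] at hcol
      obtain ⟨j, hj | hj⟩ := hcol
      · convert card_lines p j hj (le_of_eq (by rw [← hcp]; congr!))
      · have := card_lines (fun v => ¬ p v) j hj (by convert hcnp)
        simp only [not_not] at this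
        simp only [and_comm] at this ⊢
        convert this
    refine many_of_lines σ Prod.fst ?_
      (Finset.univ.filter (fun i => (∃ j, p (i, j)) ∧ ∃ j, ¬ p (i, j))) ?_ _ ?_
    · intro u v h
      rw [grid_adj] at h
      omega
    · intro i hi
      obtain ⟨-, h1, h2⟩ := Finset.mem_filter.1 hi
      obtain ⟨a, b, hab, ha, hb⟩ := exists_change (fun j => p (i, j)) h1 h2
      exact ⟨(i, a), (i, b), rfl, rfl, ha, hb, (grid_adj _ _).2 (Or.inl ⟨rfl, hab⟩)⟩
    · omega
end
end

section
/- Let n ≥ 2 and N = n², and let |G_n⟩ ∈ ℂ^(2^N) be the cluster state, i.e., the graph state of the n×n grid graph. For every ordering q_1,…,q_N of the N qubits of |G_n⟩, there exists j ∈ {1,…,N−1} such that the Schmidt rank of |G_n⟩ relative to the bipartition ({q_1,…,q_j}, {q_{j+1},…,q_N}) is at least 2^(n−1). -/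
open Matrix

noncomputable section

theorem aux_flip {V : Type*} [Fintype V] [DecidableEq V] (G : SimpleGraph V) (w : V) (x : V → Bool)
    (hx : x w = false) :
    Set.ncard {e ∈ G.edgeSet | ∀ v ∈ e, Function.update x w true v = true}
      = Set.ncard {e ∈ G.edgeSet | ∀ v ∈ e, x v = true}
        + Set.ncard {u | G.Adj w u ∧ x u = true} := by
  have himg : Set.ncard {u | G.Adj w u ∧ x u = true}
      = Set.ncard ((fun u => s(w, u)) '' {u | G.Adj w u ∧ x u = true}) := by
    rw [Set.ncard_image_of_injective]
    intro u v h
    have h' : u = v ∨ w = v ∧ u = w := by simpa using h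
    rcases h' with h' | ⟨h1, h2⟩
    · exact h'
    · rw [h2, h1]
  rw [himg, ← Set.ncard_union_eq _ (Set.toFinite _) (Set.toFinite _)]
  · congr 1
    ext e
    induction e using Sym2.ind with
    | _ p q =>
      simp only [Set.mem_ofPred_eq, SimpleGraph.mem_edgeSet, Sym2.mem_iff, forall_eq_or_imp,
        forall_eq, Set.mem_union, Set.mem_image, Function.update_apply, Sym2.eq_iff]
      constructor
      · rintro ⟨h, h1, h2⟩
        have hne := h.ne
        by_cases hp : p = w
        · subst hp
          right
          exact ⟨q, ⟨h, by simpa [hne.symm] using h2⟩, Or.inl ⟨rfl, rfl⟩⟩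
        · by_cases hq : q = w
          · subst hq
            right
            exact ⟨p, ⟨h.symm, by simpa [hp] using h1⟩, Or.inr ⟨rfl, rfl⟩⟩
          · left
            exact ⟨h, by simpa [hp] using h1, by simpa [hq] using h2⟩
      · rintro (⟨h, h1, h2⟩ | ⟨u, ⟨h, h1⟩, (⟨rfl, rfl⟩ | ⟨rfl, rfl⟩)⟩)
        · exact ⟨h, by simp [h1], by simp [h2]⟩
        · exact ⟨h, by simp, by simp [h1]⟩
        · exact ⟨h.symm, by simp [h1], by simp⟩
  · rw [Set.disjoint_left]
    rintro e ⟨_, h⟩ ⟨u, _, rfl⟩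
    have := h w (by simp)
    simp [hx] at this

theorem aux_nb {V : Type*} [Fintype V] [DecidableEq V] (G : SimpleGraph V) (w u : V) (x y : V → Bool)
    (hu : G.Adj w u) (hxu : x u = true) (hyu : y u = false)
    (h : ∀ v, G.Adj w v → x v ≠ y v → v = u) :
    Set.ncard {u | G.Adj w u ∧ x u = true} = Set.ncard {u | G.Adj w u ∧ y u = true} + 1 := by
  rw [← Set.ncard_insert_of_notMem (a := u) (by simp [hyu]) (Set.toFinite _)]
  congr 1
  ext v
  simp only [Set.mem_ofPred_eq, Set.mem_insert_iff]
  by_cases hv : v = u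
  · subst hv; simp [hu, hxu]
  · have := h v
    by_cases ha : G.Adj w v
    · have : x v = y v := by by_contra hc; exact hv (this ha hc)
      simp [hv, this]
    · simp [ha, hv]

theorem aux_sum {V : Type*} [Fintype V] [DecidableEq V] (G : SimpleGraph V) (w u : V) (x y : V → Bool)
    (hu : G.Adj w u) (hxu : x u ≠ y u) (hxw : x w = false) (hyw : y w = false)
    (h : ∀ v, G.Adj w v → x v ≠ y v → v = u) :
    ampGraphState G (Function.update x w true) * ampGraphState G (Function.update y w true)
      = - (ampGraphState G x * ampGraphState G y) := by
  unfold ampGraphState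
  rw [aux_flip G w x hxw, aux_flip G w y hyw]
  have key : ((-1 : ℂ) ^ Set.ncard {u | G.Adj w u ∧ x u = true}) *
      (-1) ^ Set.ncard {u | G.Adj w u ∧ y u = true} = -1 := by
    have sq : ∀ k : ℕ, ((-1 : ℂ) ^ k) * (-1) ^ k = 1 := by
      intro k; rw [← mul_pow]; simp
    cases hx : x u <;> cases hy : y u
    · simp [hx, hy] at hxu
    · rw [aux_nb G w u y x hu hy hx (fun v a b => h v a b.symm), pow_succ, ← mul_assoc, sq]; simp
    · rw [aux_nb G w u x y hu hx hy h, pow_succ, mul_right_comm, sq]; simp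
    · simp [hx, hy] at hxu
  rw [pow_add, pow_add]
  linear_combination ((-1 : ℂ) ^ Set.ncard {e ∈ G.edgeSet | ∀ v ∈ e, x v = true}) *
      ((-1 : ℂ) ^ Set.ncard {e ∈ G.edgeSet | ∀ v ∈ e, y v = true}) /
      (Real.sqrt (2 ^ Fintype.card V) : ℂ) / (Real.sqrt (2 ^ Fintype.card V) : ℂ) * key

theorem aux_sum' {V : Type*} [Fintype V] [DecidableEq V] (G : SimpleGraph V) (w u : V) (x y : V → Bool)
    (hu : G.Adj w u) (hxu : x u ≠ y u) (hxy : x w = y w)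
    (h : ∀ v, G.Adj w v → x v ≠ y v → v = u) :
    ampGraphState G (Function.update x w (!x w)) * ampGraphState G (Function.update y w (!x w))
      = - (ampGraphState G x * ampGraphState G y) := by
  cases hw : x w
  · exact aux_sum G w u x y hu hxu hw (hxy ▸ hw) h
  · have huw : u ≠ w := hu.ne'
    have := aux_sum G w u (Function.update x w false) (Function.update y w false) hu
      (by simpa [huw] using hxu) (by simp) (by simp) (by
        intro v hv hne
        have : v ≠ w := hv.ne'
        exact h v hv (by simpa [this] using hne))
    simp only [Function.update_idem] at this
    have e1 : Function.update x w true = x := by rw [← hw]; simp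
    have e2 : Function.update y w true = y := by rw [← hw, hxy]; simp
    rw [e1, e2] at this
    simp only [Bool.not_true]
    rw [this, neg_neg]

theorem aux_ne {V : Type*} [Fintype V] (G : SimpleGraph V) (x : V → Bool) :
    ampGraphState G x * ampGraphState G x = ((2 : ℂ) ^ Fintype.card V)⁻¹ := by
  unfold ampGraphState
  rw [div_mul_div_comm, ← mul_pow, ← Complex.ofReal_mul, Real.mul_self_sqrt (by positivity)]
  simp

def auxAsg {V : Type*} {N : ℕ} (σ : Fin N ≃ V) (j : ℕ) (a : Fin j → Bool)
    (b : Fin (N - j) → Bool) (v : V) : Bool :=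
  if h : ((σ.symm v : Fin N) : ℕ) < j then a ⟨(σ.symm v : ℕ), h⟩
            else b ⟨((σ.symm v : Fin N) : ℕ) - j, by
              have := (σ.symm v).isLt; omega⟩

open Classical in
theorem aux_core {V : Type*} [Fintype V] (G : SimpleGraph V) {N : ℕ} (σ : Fin N ≃ V) (j : ℕ)
    (hjN : j ≤ N)
    {ι : Type} [Fintype ι] (p q : ι → V) (ht : ι → ℕ) (hp : ∀ c, (σ.symm (p c) : ℕ) < j)
    (hq : ∀ c, j ≤ (σ.symm (q c) : ℕ)) (hinj : Function.Injective p)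
    (hadj : ∀ c, G.Adj (q c) (p c))
    (htri : ∀ c c', G.Adj (q c) (p c') → c' = c ∨ ht c < ht c') :
    2 ^ Fintype.card ι ≤ Matrix.rank (fun (a : Fin j → Bool) (b : Fin (N - j) → Bool) =>
          ampGraphState G (auxAsg σ j a b)) := by
  set M : Matrix (Fin j → Bool) (Fin (N - j) → Bool) ℂ := fun a b =>
          ampGraphState G (auxAsg σ j a b) with hM
  let row : (ι → Bool) → (Fin j → Bool) := fun S i =>
    decide (∃ c, S c = true ∧ p c = σ ⟨i, lt_of_lt_of_le i.2 hjN⟩)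
  have hrowp : ∀ S b c, auxAsg σ j (row S) b (p c) = S c := by
    intro S b c
    unfold auxAsg
    rw [dif_pos (hp c)]
    simp only [row, Fin.eta, Equiv.apply_symm_apply]
    rw [Bool.eq_iff_iff]
    simp only [decide_eq_true_eq]
    constructor
    · rintro ⟨c', h, h'⟩
      rwa [← hinj h']
    · intro h; exact ⟨c, h, rfl⟩
  have hrown : ∀ S S' b v, auxAsg σ j (row S) b v ≠ auxAsg σ j (row S') b v →
      ∃ c, v = p c := by
    intro S S' b v hne
    by_contra hc
    push Not at hc
    apply hne
    unfold auxAsg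
    split_ifs with h
    · simp only [row, Fin.eta, Equiv.apply_symm_apply]
      rw [Bool.eq_iff_iff]
      simp only [decide_eq_true_eq]
      constructor
      · rintro ⟨c, _, h⟩; exact absurd h.symm (hc c)
      · rintro ⟨c, _, h⟩; exact absurd h.symm (hc c)
    · rfl
  let K : Matrix (ι → Bool) (Fin (N - j) → Bool) ℂ := fun S b => M (row S) b
  have hK : K = M.submatrix row id := rfl
  have hKM : K.rank ≤ M.rank := by
    rw [hK]
    exact Matrix.rank_submatrix_le M row id
  have hgram : K * K.transpose = ((2 : ℂ) ^ (N - j) * ((2 : ℂ) ^ Fintype.card V)⁻¹) •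
      (1 : Matrix (ι → Bool) (ι → Bool) ℂ) := by
    ext S S'
    rw [Matrix.mul_apply, Matrix.smul_apply, Matrix.one_apply]
    by_cases hS : S = S'
    · subst hS
      simp only [Matrix.transpose_apply]
      simp [K, hM, aux_ne]
    · rw [if_neg hS, smul_zero]
      obtain ⟨c0, hc0⟩ : ∃ c, S c ≠ S' c := Function.ne_iff.mp hS
      obtain ⟨c, hc, hmax⟩ := Finset.exists_max_image (Finset.univ.filter (fun c => S c ≠ S' c)) ht
        ⟨c0, by simpa using hc0⟩
      simp only [Finset.mem_filter, Finset.mem_univ, true_and] at hc hmax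
      let i0 : Fin (N - j) := ⟨(σ.symm (q c) : ℕ) - j, by
        have := (σ.symm (q c)).isLt; have := hq c; omega⟩
      have hqv : ∀ a b, auxAsg σ j a b (q c) = b i0 := by
        intro a b
        unfold auxAsg
        rw [dif_neg (by have := hq c; omega)]
      have hupd : ∀ a b t, auxAsg σ j a (Function.update b i0 t)
          = Function.update (auxAsg σ j a b) (q c) t := by
        intro a b t
        ext v
        by_cases hv : v = q c
        · subst hv; rw [hqv]; simp
        · rw [Function.update_of_ne hv]
          unfold auxAsg
          split_ifs with h
          · rfl
          · rw [Function.update_of_ne]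
            intro he
            apply hv
            apply σ.symm.injective
            apply Fin.ext
            have := congrArg Fin.val he
            simp only [i0] at this
            have := hq c
            omega
      have hflip : ∀ b, K S (Function.update b i0 (!b i0)) * K S' (Function.update b i0 (!b i0))
          = - (K S b * K S' b) := by
        intro b
        simp only [K, hM, hupd]
        have := aux_sum' G (q c) (p c) (auxAsg σ j (row S) b) (auxAsg σ j (row S') b) (hadj c)
          (by rw [hrowp, hrowp]; exact hc) (by rw [hqv, hqv]) (by
            intro v hv hne
            obtain ⟨c', rfl⟩ := hrown _ _ _ _ hne
            rw [hrowp, hrowp] at hne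
            rcases htri c c' hv with h | h
            · rw [h]
            · exact absurd (hmax c' hne) (by omega))
        rw [hqv] at this
        exact this
      have hinv : Function.Involutive
          (fun b : Fin (N - j) → Bool => Function.update b i0 (!b i0)) := by
        intro b; simp
      have h1 : ∑ b, K S b * K S' b = ∑ b, -(K S b * K S' b) :=
        (Equiv.sum_comp hinv.toPerm (fun b => K S b * K S' b)).symm.trans
          (Finset.sum_congr rfl (fun b _ => hflip b))
      rw [Finset.sum_neg_distrib] at h1
      simp only [Matrix.transpose_apply]
      exact self_eq_neg.mp h1
  have hr : (K * K.transpose).rank = 2 ^ Fintype.card ι := by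
    rw [hgram, Matrix.rank_of_isUnit]
    · simp
    · have hne : ((2 : ℂ) ^ (N - j) * ((2 : ℂ) ^ Fintype.card V)⁻¹) ≠ 0 := by simp
      exact (isUnit_one).smul (Units.mk0 _ hne)
  calc 2 ^ Fintype.card ι = (K * K.transpose).rank := hr.symm
    _ ≤ K.rank := Matrix.rank_mul_le_left _ _
    _ ≤ M.rank := hKM

theorem aux_row (n : ℕ) (σ : Fin (n ^ 2) ≃ (Fin n × Fin n)) (j : ℕ) (hjN : j ≤ n ^ 2)
    (r c0 : Fin n) (hr : ∀ c, (σ.symm (r, c) : ℕ) < j)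
    (hc : ∀ c, c ≠ c0 → ∃ r', j ≤ (σ.symm (r', c) : ℕ)) :
    2 ^ (n - 1) ≤ Matrix.rank (fun (a : Fin j → Bool) (b : Fin (n ^ 2 - j) → Bool) =>
          ampGraphState (gridGraph n) (auxAsg σ j a b)) := by
  let d : Fin n → ℕ := fun s => ((s : ℕ) - r) + ((r : ℕ) - s)
  have hex : ∀ c : {c : Fin n // c ≠ c0}, ∃ f g : Fin n, j ≤ (σ.symm (f, c.1) : ℕ) ∧
      (σ.symm (g, c.1) : ℕ) < j ∧ d f = d g + 1 ∧ ((f : ℕ) + 1 = g ∨ (g : ℕ) + 1 = f) := by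
    rintro ⟨c, hcc⟩
    obtain ⟨r1, hr1⟩ := hc c hcc
    obtain ⟨f, hf, hmin⟩ := Finset.exists_min_image
      (Finset.univ.filter (fun s : Fin n => j ≤ (σ.symm (s, c) : ℕ))) d ⟨r1, by simpa using hr1⟩
    simp only [Finset.mem_filter, Finset.mem_univ, true_and] at hf hmin
    have hfr : f ≠ r := by
      rintro rfl
      have := hr c
      omega
    have hfr' : (f : ℕ) ≠ r := fun h => hfr (Fin.ext h)
    have hf2 := f.isLt
    have hr2 := r.isLt
    rcases lt_or_gt_of_ne hfr' with h | h
    · refine ⟨f, ⟨f + 1, by omega⟩, hf, ?_, ?_, Or.inl rfl⟩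
      · by_contra hcon
        have := hmin ⟨f + 1, by omega⟩ (not_lt.mp hcon)
        simp only [d] at this
        omega
      · simp only [d]; omega
    · refine ⟨f, ⟨f - 1, by omega⟩, hf, ?_, ?_, Or.inr ?_⟩
      · by_contra hcon
        have := hmin ⟨f - 1, by omega⟩ (not_lt.mp hcon)
        simp only [d] at this
        omega
      · simp only [d]; omega
      · simp only; omega
  choose f g hf hg hd hs using hex
  have := aux_core (gridGraph n) σ j hjN (ι := {c : Fin n // c ≠ c0})
    (fun c => (g c, c.1)) (fun c => (f c, c.1)) (fun c => d (f c)) hg hf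
    (by intro c c' h; exact Subtype.ext (Prod.mk.inj h).2)
    (by
      intro c
      have := hs c
      simp only [gridGraph, SimpleGraph.fromRel_adj, ne_eq, Prod.mk.injEq, not_and]
      refine ⟨fun h => ?_, ?_⟩
      · have := congrArg Fin.val h; omega
      · rcases this with h | h
        · left; right; exact ⟨trivial, h⟩
        · right; right; exact ⟨trivial, h⟩)
    (by
      intro c c' h
      simp only [gridGraph, SimpleGraph.fromRel_adj] at h
      rcases h.2 with (h | h) | (h | h)
      · right; rw [hd c', h.1]; omega
      · left; exact Subtype.ext h.1.symm
      · right; rw [hd c', h.1]; omega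
      · left; exact Subtype.ext h.1)
  simpa [Fintype.card_subtype_compl] using this

theorem aux_swap (n : ℕ) (x : Fin n × Fin n → Bool) :
    ampGraphState (gridGraph n) (fun v => x v.swap) = ampGraphState (gridGraph n) x := by
  unfold ampGraphState
  congr 2
  have hadj : ∀ u v : Fin n × Fin n, (gridGraph n).Adj u.swap v.swap ↔ (gridGraph n).Adj u v := by
    rintro ⟨a, b⟩ ⟨c, d⟩
    simp only [gridGraph, SimpleGraph.fromRel_adj, Prod.swap, ne_eq, Prod.mk.injEq]
    tauto
  rw [← Set.ncard_image_of_injective _ (Sym2.map.injective (Prod.swap_injective (α := Fin n) (β := Fin n)))]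
  congr 1
  ext e
  constructor
  · rintro ⟨e', ⟨h1, h2⟩, rfl⟩
    induction e' using Sym2.ind with
    | _ u v =>
      simp only [SimpleGraph.mem_edgeSet, Sym2.mem_iff, forall_eq_or_imp, forall_eq] at h1 h2
      simp only [Set.mem_ofPred_eq, Sym2.map_mk, SimpleGraph.mem_edgeSet, Sym2.mem_iff,
        forall_eq_or_imp, forall_eq]
      exact ⟨(hadj u v).2 h1, h2⟩
  · rintro ⟨h1, h2⟩
    induction e using Sym2.ind with
    | _ u v =>
      simp only [SimpleGraph.mem_edgeSet, Sym2.mem_iff, forall_eq_or_imp, forall_eq] at h1 h2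
      refine ⟨s(u.swap, v.swap), ?_, by simp⟩
      simp only [Set.mem_ofPred_eq, SimpleGraph.mem_edgeSet, Sym2.mem_iff,
        forall_eq_or_imp, forall_eq, Prod.swap_swap]
      exact ⟨(hadj u v).2 h1, h2⟩

theorem aux_main (n : ℕ) (hn : 2 ≤ n) (σ : Fin (n ^ 2) ≃ (Fin n × Fin n)) (j : ℕ)
    (r : Fin n) (hr : ∀ c, (σ.symm (r, c) : ℕ) < j)
    (hmr : ∀ k < j, ∃ c, k ≤ (σ.symm (r, c) : ℕ))
    (hmc : ∀ k < j, ∀ c, ∃ r', k ≤ (σ.symm (r', c) : ℕ)) :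
    1 ≤ j ∧ j ≤ n ^ 2 - 1 ∧
    2 ^ (n - 1) ≤ Matrix.rank (fun (a : Fin j → Bool) (b : Fin (n ^ 2 - j) → Bool) =>
          ampGraphState (gridGraph n) (auxAsg σ j a b)) := by
  have h1 : 1 ≤ j := by have := hr ⟨0, by omega⟩; omega
  obtain ⟨c0, hc0⟩ := hmr (j - 1) (by omega)
  have hc0' := hr c0
  have hc : ∀ c, c ≠ c0 → ∃ r', j ≤ (σ.symm (r', c) : ℕ) := by
    intro c hcc
    obtain ⟨r', hr'⟩ := hmc (j - 1) (by omega) c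
    refine ⟨r', ?_⟩
    by_contra hcon
    have : σ.symm (r', c) = σ.symm (r, c0) := Fin.ext (by omega)
    have := σ.symm.injective this
    exact hcc (Prod.mk.inj this).2
  have hj : j ≤ n ^ 2 - 1 := by
    obtain ⟨c, hcc⟩ : ∃ c, c ≠ c0 := by
      have : Nontrivial (Fin n) := Fin.nontrivial_iff_two_le.2 hn
      exact exists_ne c0
    obtain ⟨r', hr'⟩ := hc c hcc
    have := (σ.symm (r', c)).isLt
    omega
  exact ⟨h1, hj, aux_row n σ j (by omega) r c0 hr hc⟩

/-- For any qubit order, the `n × n` cluster state has a cut whose Schmidt rank is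
at least `2^(n−1)`. -/
theorem cluster_state_schmidt_rank (n : ℕ) (hn : 2 ≤ n)
    (σ : Fin (n ^ 2) ≃ (Fin n × Fin n)) :
    ∃ j : ℕ, 1 ≤ j ∧ j ≤ n ^ 2 - 1 ∧
      2 ^ (n - 1) ≤
        Matrix.rank (fun (a : Fin j → Bool) (b : Fin (n ^ 2 - j) → Bool) =>
          ampGraphState (gridGraph n) (fun v =>
            if h : ((σ.symm v : Fin (n ^ 2)) : ℕ) < j then a ⟨(σ.symm v : ℕ), h⟩
            else b ⟨((σ.symm v : Fin (n ^ 2)) : ℕ) - j, by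
              have := (σ.symm v).isLt; omega⟩)) := by
  classical
  have hP : ∃ j : ℕ, (∃ r, ∀ c, (σ.symm (r, c) : ℕ) < j) ∨ (∃ c, ∀ r, (σ.symm (r, c) : ℕ) < j) :=
    ⟨n ^ 2, Or.inl ⟨⟨0, by omega⟩, fun c => (σ.symm _).isLt⟩⟩
  have hmin : ∀ k < Nat.find hP, (∀ r, ∃ c, k ≤ (σ.symm (r, c) : ℕ)) ∧
      (∀ c, ∃ r, k ≤ (σ.symm (r, c) : ℕ)) := by
    intro k hk
    have := Nat.find_min hP hk
    push Not at this
    exact this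
  refine ⟨Nat.find hP, ?_⟩
  rcases Nat.find_spec hP with ⟨r, hr⟩ | ⟨c, hc⟩
  · exact aux_main n hn σ _ r hr (fun k hk => (hmin k hk).1 r) (fun k hk => (hmin k hk).2)
  · have := aux_main n hn (σ.trans (Equiv.prodComm _ _)) _ c hc
      (fun k hk => (hmin k hk).2 c) (fun k hk => (hmin k hk).1)
    refine ⟨this.1, this.2.1, this.2.2.trans (le_of_eq ?_)⟩
    congr 1
    ext a b
    exact aux_swap n (auxAsg σ _ a b)
end
end
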